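/- arXiv:2107.08830 — 2 statements merged into one kernel-verified Lean document; each statement's English description precedes it below -/
import Mathlib

section
/- Let 0 < β₀ < 1 and let λ ∈ ℂ with Re λ < 0. Then there exists T₀ > 1 such that for every t₀ ≥ T₀ the following holds: for every b ∈ ℂ that lies in the image of the half-open interval [β₀, 1) under the map ρ ↦ E_ρ(λ·t₀^ρ), there exists a unique ρ* ∈ [β₀, 1] such that E_{ρ*}(λ·t₀^{ρ*}) = b. -/
/-- The (one-parameter) Mittag-Leffler function `E_β(z) = ∑ₖ zᵏ / Γ(βk + 1)`. -/
noncomputable def mittagLeffler (β : ℝ) (z : ℂ) : ℂ :=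
  ∑' k : ℕ, z ^ k / Complex.Gamma (β * k + 1)

section MLHelpers

open MeasureTheory Filter Topology Set

noncomputable def mlS (a x : ℝ) : ℂ := ((2 * a - a * √(1 + x ^ 2) : ℝ) : ℂ) + (x : ℂ) * Complex.I
noncomputable def mlD (a x : ℝ) : ℂ := ((-(a * (x / √(1 + x ^ 2))) : ℝ) : ℂ) + Complex.I

def mlSec (a : ℝ) : Set ℂ := {s | s ≠ 0 ∧ -a * ‖s‖ ≤ s.re}

lemma mlS_re (a x : ℝ) : (mlS a x).re = 2 * a - a * √(1 + x ^ 2) := by simp [mlS, -Complex.ofReal_sub, -Complex.ofReal_mul]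
lemma mlS_im (a x : ℝ) : (mlS a x).im = x := by simp [mlS, -Complex.ofReal_sub, -Complex.ofReal_mul]

lemma ml_sqrt_le (x : ℝ) : √(1 + x ^ 2) ≤ 1 + |x| := by
  apply Real.sqrt_le_iff.2
  constructor
  · positivity
  · nlinarith [abs_nonneg x, sq_abs x]

lemma ml_le_sqrt (x : ℝ) : |x| ≤ √(1 + x ^ 2) := by
  apply Real.le_sqrt_of_sq_le
  rw [sq_abs]; linarith

lemma mlS_hasDerivAt (a x : ℝ) : HasDerivAt (mlS a) (mlD a x) x := by
  have h1 : HasDerivAt (fun x : ℝ => 2 * a - a * √(1 + x ^ 2)) (-(a * (x / √(1 + x ^ 2)))) x := by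
    have h0 : HasDerivAt (fun x : ℝ => 1 + x ^ 2) (2 * x) x := by
      simpa using (hasDerivAt_pow 2 x).const_add 1
    have := ((h0.sqrt (by positivity)).const_mul a).const_sub (2 * a)
    rwa [mul_div_mul_left _ _ (two_ne_zero)] at this
  have h2 := (h1.ofReal_comp).add ((Complex.ofRealCLM.hasDerivAt (x := x)).mul_const Complex.I)
  have e : mlS a = (fun y : ℝ => ((2 * a - a * √(1 + y ^ 2) : ℝ) : ℂ)) + fun y : ℝ => (Complex.ofRealCLM y) * Complex.I := by
    ext y; simp [mlS]
  rw [e]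
  simpa [mlD] using h2

lemma mlS_abs_le (a x : ℝ) : |x| ≤ ‖mlS a x‖ := by
  have := Complex.abs_im_le_norm (mlS a x)
  rwa [mlS_im] at this

lemma mlS_re_ge {a : ℝ} (ha : 0 < a) (x : ℝ) : a - a * |x| ≤ (mlS a x).re := by
  rw [mlS_re]
  nlinarith [ml_sqrt_le x]

lemma mlS_re_le {a : ℝ} (ha : 0 < a) (x : ℝ) : (mlS a x).re ≤ 2 * a - a * |x| := by
  rw [mlS_re]
  nlinarith [ml_le_sqrt x]

lemma mlS_norm_ge {a : ℝ} (ha : 0 < a) (ha2 : a ≤ 1 / 2) (x : ℝ) : a / 2 ≤ ‖mlS a x‖ := by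
  by_cases h : |x| ≤ 1 / 2
  · have := mlS_re_ge ha x
    have h2 := Complex.re_le_norm (mlS a x)
    nlinarith
  · have := mlS_abs_le a x
    linarith

lemma mlS_norm_le {a : ℝ} (ha : 0 < a) (ha2 : a ≤ 1 / 2) (x : ℝ) : ‖mlS a x‖ ≤ 2 * (1 + |x|) := by
  have h := Complex.norm_le_abs_re_add_abs_im (mlS a x)
  rw [mlS_im] at h
  have : |(mlS a x).re| ≤ 1 + |x| := by
    rw [abs_le]
    constructor
    · have := mlS_re_ge ha x
      nlinarith [abs_nonneg x]
    · have := mlS_re_le ha x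
      nlinarith [abs_nonneg x]
  linarith [abs_nonneg x]

lemma mlS_sec {a : ℝ} (ha : 0 < a) (ha2 : a ≤ 1 / 2) (x : ℝ) : mlS a x ∈ mlSec a := by
  refine ⟨?_, ?_⟩
  · rw [← norm_pos_iff]
    linarith [mlS_norm_ge ha ha2 x]
  · have := mlS_re_ge ha x
    have h2 := mlS_abs_le a x
    nlinarith

lemma mlD_norm_le {a : ℝ} (ha : 0 < a) (ha2 : a ≤ 1 / 2) (x : ℝ) : ‖mlD a x‖ ≤ 2 := by
  unfold mlD
  refine (norm_add_le _ _).trans ?_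
  rw [Complex.norm_real, Complex.norm_I, norm_neg, norm_mul, norm_div]
  have h : ‖x‖ / ‖√(1 + x ^ 2)‖ ≤ 1 := by
    apply div_le_one_of_le₀ _ (norm_nonneg _)
    rw [Real.norm_eq_abs, Real.norm_eq_abs, abs_of_nonneg (Real.sqrt_nonneg _)]
    exact ml_le_sqrt x
  rw [Real.norm_eq_abs a, abs_of_pos ha]
  nlinarith

lemma mlS_continuous (a : ℝ) : Continuous (mlS a) := by
  unfold mlS; fun_prop

lemma mlD_continuous (a : ℝ) : Continuous (mlD a) := by
  unfold mlD
  have : ∀ x : ℝ, √(1 + x ^ 2) ≠ 0 := fun x => by positivity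
  fun_prop (disch := exact this _)

lemma mlSec_smul {a η : ℝ} (hη : 0 < η) {s : ℂ} (hs : s ∈ mlSec a) : (η : ℂ) * s ∈ mlSec a := by
  obtain ⟨h1, h2⟩ := hs
  refine ⟨mul_ne_zero (by exact_mod_cast hη.ne') h1, ?_⟩
  rw [norm_mul, Complex.norm_real, Real.norm_of_nonneg hη.le, Complex.re_ofReal_mul]
  nlinarith

lemma mlSec_slit {a : ℝ} (ha2 : a ≤ 1 / 2) {s : ℂ} (hs : s ∈ mlSec a) :
    s ∈ Complex.slitPlane := by
  obtain ⟨h1, h2⟩ := hs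
  rw [Complex.mem_slitPlane_iff]
  by_contra! h
  have : s = ((s.re : ℝ) : ℂ) := by apply Complex.ext <;> simp [h.2]
  have h3 : ‖s‖ = -s.re := by
    rw [this, Complex.norm_real, Real.norm_eq_abs, abs_of_nonpos h.1]; simp
  have h4 : 0 < ‖s‖ := norm_pos_iff.2 h1
  nlinarith

lemma ml_int_exp (n : ℕ) {b : ℝ} (hb : 0 < b) :
    Integrable (fun x : ℝ => (1 + |x|) ^ n * Real.exp (-b * |x|)) := by
  have hc : Continuous (fun x : ℝ => (1 + |x|) ^ n * Real.exp (-b * |x|)) := by fun_prop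
  -- bound: exp(b (1+|x|)) ≥ (b(1+|x|))^(n+2)/(n+2)!
  set C := (n + 2).factorial / b ^ (n + 2) * Real.exp b with hC
  refine (integrable_inv_one_add_sq.const_mul C).mono' hc.aestronglyMeasurable (Eventually.of_forall fun x => ?_)
  have hx := abs_nonneg x
  rw [Real.norm_of_nonneg (by positivity)]
  have h1 := Real.pow_div_factorial_le_exp (b * (1 + |x|)) (by positivity) (n + 2)
  have h2 : Real.exp (-b * |x|) = Real.exp b / Real.exp (b * (1 + |x|)) := by
    rw [← Real.exp_sub]; ring_nf
  have h3 : 1 / Real.exp (b * (1 + |x|)) ≤ (n + 2).factorial / (b * (1 + |x|)) ^ (n + 2) := by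
    rw [div_le_iff₀ (by positivity)] at h1 ⊢
    rw [div_mul_eq_mul_div, le_div_iff₀ (by positivity)]
    linarith
  have h4 : ((1 + |x|) ^ 2)⁻¹ ≤ (1 + x ^ 2)⁻¹ := by
    apply inv_anti₀ (by positivity)
    nlinarith [sq_abs x]
  calc _ = (1 + |x|) ^ n * Real.exp b * (1 / Real.exp (b * (1 + |x|))) := by rw [h2]; ring
    _ ≤ (1 + |x|) ^ n * Real.exp b * ((n + 2).factorial / (b * (1 + |x|)) ^ (n + 2)) := by gcongr
    _ = C * ((1 + |x|) ^ 2)⁻¹ := by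
      rw [hC, mul_pow, pow_add (1 + |x|)]; field_simp
    _ ≤ _ := by gcongr

lemma ml_exp_norm {a η : ℝ} (ha : 0 < a) (hη : 0 < η) (x : ℝ) :
    ‖Complex.exp (η * mlS a x)‖ ≤ Real.exp (2 * a * η) * Real.exp (-(a * η) * |x|) := by
  rw [Complex.norm_exp, Complex.re_ofReal_mul, ← Real.exp_add]
  apply Real.exp_le_exp.2
  have := mlS_re_le ha x
  nlinarith

lemma ml_gamma_mono {x y : ℝ} (hx : 0 ≤ x) (hxy : x ≤ y) (hy : y ≤ 1) :
    1 / 2 * (y - x) ≤ (Real.Gamma y)⁻¹ - (Real.Gamma x)⁻¹ := by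
  have hinv : ∀ x : ℝ, 0 ≤ x → (Real.Gamma x)⁻¹ = x / Real.Gamma (1 + x) := by
    intro x hx
    rcases hx.eq_or_lt with rfl | h
    · simp
    · rw [add_comm, Real.Gamma_add_one h.ne']
      have := Real.Gamma_pos_of_pos h
      field_simp
  have hγ := Real.one_half_lt_eulerMascheroniConstant
  set g := Real.eulerMascheroniConstant
  have hd : HasDerivAt Real.Gamma (1 - g) 2 := by
    have := Real.hasDerivAt_Gamma_nat 1
    norm_num at this
    convert this using 1
    ring
  have hconv := Real.convexOn_Gamma
  -- slopes
  have hsl : ∀ u, 0 < u → u < 2 → (1 - Real.Gamma u) ≤ (1 - g) * (2 - u) := by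
    intro u hu hu2
    have := hconv.slope_le_of_hasDerivAt (x := u) (y := 2) hu (by simp) hu2 hd
    rw [slope_def_field, div_le_iff₀ (by linarith), Real.Gamma_two] at this
    exact this
  have hle1 : ∀ u, 1 ≤ u → u ≤ 2 → Real.Gamma u ≤ 1 := by
    intro u h1 h2
    have := hconv.2 (show (1:ℝ) ∈ Ioi 0 by simp) (show (2:ℝ) ∈ Ioi 0 by simp) (show 0 ≤ 2 - u by linarith) (show 0 ≤ u - 1 by linarith) (by ring)
    simp only [smul_eq_mul, Real.Gamma_one, Real.Gamma_two] at this
    rw [show (2 - u) * 1 + (u - 1) * 2 = u by ring] at this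
    linarith
  have hsl2 : ∀ u, 0 < u → u ≤ 2 → (1 - Real.Gamma u) ≤ (1 - g) * (2 - u) := by
    intro u hu hu2
    rcases hu2.eq_or_lt with rfl | h
    · simp
    · exact hsl u hu h
  have key : Real.Gamma (1 + y) - Real.Gamma (1 + x) ≤ (1 - g) * (y - x) := by
    rcases hxy.eq_or_lt with rfl | hlt
    · simp
    rcases hy.eq_or_lt with rfl | hy1
    · have := hsl2 (1 + x) (by linarith) (by linarith)
      rw [show (1 : ℝ) + 1 = 2 by norm_num, Real.Gamma_two]; linarith
    · have h1 := hconv.slope_mono_adjacent (x := 1 + x) (y := 1 + y) (z := 2) (by simp; linarith) (by simp) (by linarith) (by linarith)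
      rw [Real.Gamma_two] at h1
      have h2 := hsl (1 + y) (by linarith) (by linarith)
      have h3 : (1 - Real.Gamma (1 + y)) / (2 - (1 + y)) ≤ 1 - g := by
        rw [div_le_iff₀ (by linarith)]; exact h2
      have h4 := h1.trans h3
      rw [div_le_iff₀ (by linarith)] at h4
      linarith
  rw [hinv x hx, hinv y (by linarith)]
  have p1 := Real.Gamma_pos_of_pos (show 0 < 1 + x by linarith)
  have p2 := Real.Gamma_pos_of_pos (show 0 < 1 + y by linarith)
  have q1 := hle1 (1 + x) (by linarith) (by linarith)
  have q2 := hle1 (1 + y) (by linarith) (by linarith)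
  have q3 := hsl2 (1 + y) (by linarith) (by linarith)
  set A := Real.Gamma (1 + x)
  set B := Real.Gamma (1 + y)
  rw [div_sub_div _ _ p2.ne' p1.ne', le_div_iff₀ (by positivity)]
  have hAB : B * A ≤ 1 := by nlinarith
  have e1 : 1 / 2 * (y - x) * (B * A) ≤ 1 / 2 * (y - x) := by
    apply mul_le_of_le_one_right _ hAB
    linarith
  have e2 : y * (B - A) ≤ y * ((1 - g) * (y - x)) := by
    apply mul_le_mul_of_nonneg_left key; linarith
  have e3 : (y - x) * (g + (1 - g) * y) ≤ (y - x) * B := by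
    apply mul_le_mul_of_nonneg_left _ (by linarith); linarith
  have e4 : (y - x) * (1 / 2) ≤ (y - x) * g := by
    apply mul_le_mul_of_nonneg_left hγ.le; linarith
  linarith

noncomputable def mlP (a : ℝ) (q : ℂ → ℂ) (η : ℝ) : ℂ :=
  ∫ x : ℝ, Complex.exp (η * mlS a x) * (q (η * mlS a x) * (η * mlD a x))

lemma ml_integrable {a η : ℝ} (ha : 0 < a) (hη : 0 < η) {g : ℝ → ℂ}
    (hg : AEStronglyMeasurable g volume) {C : ℝ} {n : ℕ} (hb : ∀ x, ‖g x‖ ≤ C * (1 + |x|) ^ n) :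
    Integrable (fun x : ℝ => Complex.exp (η * mlS a x) * g x) := by
  have hc : Continuous (fun x : ℝ => Complex.exp (η * mlS a x)) := by
    have := mlS_continuous a
    fun_prop
  refine ((ml_int_exp n (mul_pos ha hη)).const_mul (C * Real.exp (2 * a * η))).mono'
    (hc.aestronglyMeasurable.mul hg) (Eventually.of_forall fun x => ?_)
  rw [norm_mul]
  calc _ ≤ (Real.exp (2 * a * η) * Real.exp (-(a * η) * |x|)) * (C * (1 + |x|) ^ n) := by
        gcongr
        · exact ml_exp_norm ha hη x
        · exact hb x
    _ = _ := by ring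

lemma ml_comp_cont {a η : ℝ} (ha : 0 < a) (ha2 : a ≤ 1 / 2) (hη : 0 < η) {q : ℂ → ℂ}
    (hq : ContinuousOn q (mlSec a)) : Continuous (fun x : ℝ => q (η * mlS a x)) := by
  have := mlS_continuous a
  exact hq.comp_continuous (by fun_prop) (fun x => mlSec_smul hη (mlS_sec ha ha2 x))

lemma ml_norm_eta {a η r : ℝ} (ha : 0 < a) (ha2 : a ≤ 1 / 2) (hr : 0 < r) (hη : r ≤ η) (x : ℝ) :
    r * (a / 2) ≤ ‖(η : ℂ) * mlS a x‖ := by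
  rw [norm_mul, Complex.norm_real, Real.norm_of_nonneg (by linarith)]
  have := mlS_norm_ge ha ha2 x
  have h0 : 0 ≤ η := by linarith
  gcongr

lemma ml_P_integrable {a η : ℝ} (ha : 0 < a) (ha2 : a ≤ 1 / 2) (hη : 0 < η) {q : ℂ → ℂ}
    (hq : ContinuousOn q (mlSec a)) {C : ℝ} {n : ℕ} (hb : ∀ x, ‖q (η * mlS a x)‖ ≤ C * (1 + |x|) ^ n) :
    Integrable (fun x : ℝ => Complex.exp (η * mlS a x) * (q (η * mlS a x) * (η * mlD a x))) := by
  have h1 := ml_comp_cont ha ha2 hη hq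
  have h2 := mlD_continuous a
  refine ml_integrable ha hη (C := C * (η * 2)) (n := n) (h1.mul (h2.const_smul (η:ℂ))).aestronglyMeasurable fun x => ?_
  rw [norm_mul, norm_mul, Complex.norm_real, Real.norm_of_nonneg hη.le]
  have h3 := mlD_norm_le ha ha2 x
  have := (norm_nonneg _).trans (hb x)
  calc _ ≤ (C * (1 + |x|) ^ n) * (η * 2) := by
        gcongr
        exact hb x
    _ = _ := by ring

lemma ml_deform {a : ℝ} (ha : 0 < a) (ha2 : a ≤ 1 / 2) {q q' : ℂ → ℂ}
    (hq : ∀ s ∈ mlSec a, HasDerivAt q (q' s) s)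
    (hb : ∀ r > 0, ∃ C, ∀ s ∈ mlSec a, r ≤ ‖s‖ → ‖q s‖ ≤ C ∧ ‖q' s‖ ≤ C)
    {η : ℝ} (hη : 0 < η) : mlP a q η = mlP a q 1 := by
  have hqc : ContinuousOn q (mlSec a) := fun s hs => (hq s hs).continuousAt.continuousWithinAt
  have hSc := mlS_continuous a
  have hDc := mlD_continuous a
  set F' : ℝ → ℝ → ℂ := fun η x => Complex.exp (η * mlS a x) *
    ((q (η * mlS a x) + q' (η * mlS a x)) * (mlS a x * (η * mlD a x)) + q (η * mlS a x) * mlD a x) with hF'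
  set G : ℝ → ℝ → ℂ := fun η x => Complex.exp (η * mlS a x) * (q (η * mlS a x) * mlS a x) with hG
  have hGd : ∀ η : ℝ, 0 < η → ∀ x, HasDerivAt (G η) (F' η x) x := by
    intro η hη x
    have h1 : HasDerivAt (fun x : ℝ => (η : ℂ) * mlS a x) (η * mlD a x) x :=
      (mlS_hasDerivAt a x).const_mul (η : ℂ)
    have h2 := h1.cexp
    have h3 := (hq _ (mlSec_smul hη (mlS_sec ha ha2 x))).comp x h1
    have h4 := h2.mul (h3.mul (mlS_hasDerivAt a x))
    refine h4.congr_deriv ?_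
    simp only [hF', Function.comp, Pi.mul_apply]
    ring
  have hFd : ∀ η : ℝ, 0 < η → ∀ x, HasDerivAt (fun η : ℝ => Complex.exp (η * mlS a x) * (q (η * mlS a x) * (η * mlD a x))) (F' η x) η := by
    intro η hη x
    have h0 : HasDerivAt (fun η : ℝ => (η : ℂ)) 1 η := by
      exact Complex.ofRealCLM.hasDerivAt (x := η)
    have h1 : HasDerivAt (fun η : ℝ => (η : ℂ) * mlS a x) (1 * mlS a x) η := h0.mul_const _
    have h2 := h1.cexp
    have h3 := (hq _ (mlSec_smul hη (mlS_sec ha ha2 x))).comp η h1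
    have h4 := h2.mul (h3.mul (h0.mul_const (mlD a x)))
    refine h4.congr_deriv ?_
    simp only [hF', Function.comp, Pi.mul_apply]
    ring
  have hF'meas : ∀ η : ℝ, 0 < η → AEStronglyMeasurable (F' η) volume := by
    intro η hη
    have : F' η = deriv (G η) := by ext x; exact ((hGd η hη x).deriv).symm
    rw [this]
    exact aestronglyMeasurable_deriv _ _
  have main : ∀ η : ℝ, 0 < η → HasDerivAt (mlP a q) 0 η := by
    intro η hη
    obtain ⟨C, hC⟩ := hb (η / 2 * (a / 2)) (by positivity)
    have hC' : ∀ ξ : ℝ, η / 2 ≤ ξ → ∀ x, ‖q (ξ * mlS a x)‖ ≤ C ∧ ‖q' (ξ * mlS a x)‖ ≤ C := by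
      intro ξ hξ x
      exact hC _ (mlSec_smul (by linarith) (mlS_sec ha ha2 x)) (ml_norm_eta ha ha2 (by positivity) hξ x)
    have hC0 : 0 ≤ C := (norm_nonneg _).trans (hC' η (by linarith) 0).1
    have hbd : ∀ ξ : ℝ, η / 2 ≤ ξ → ξ ≤ 2 * η → ∀ x, ‖(q (ξ * mlS a x) + q' (ξ * mlS a x)) * (mlS a x * (ξ * mlD a x)) + q (ξ * mlS a x) * mlD a x‖ ≤ (16 * η * C + 2 * C) * (1 + |x|) ^ 1 := by
      intro ξ h1 h2 x
      have e1 := (hC' ξ h1 x).1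
      have e2 := (hC' ξ h1 x).2
      have e3 := mlD_norm_le ha ha2 x
      have e4 := mlS_norm_le ha ha2 x
      have hx := abs_nonneg x
      refine (norm_add_le _ _).trans ?_
      rw [norm_mul, norm_mul, norm_mul, norm_mul, Complex.norm_real, Real.norm_of_nonneg (by linarith)]
      have hξ0 : 0 ≤ ξ := by linarith
      have e5 : ‖q (ξ * mlS a x) + q' (ξ * mlS a x)‖ ≤ C + C := (norm_add_le _ _).trans (add_le_add e1 e2)
      calc _ ≤ (C + C) * (2 * (1 + |x|) * (2 * η * 2)) + C * 2 := by
            gcongr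
        _ ≤ _ := by nlinarith [mul_nonneg hC0 hx]
    have hint : Integrable (F' η) := by
      apply ml_integrable ha hη (n := 1) (C := 16 * η * C + 2 * C) _ (hbd η (by linarith) (by linarith))
      have : (fun x => (q (η * mlS a x) + q' (η * mlS a x)) * (mlS a x * (η * mlD a x)) + q (η * mlS a x) * mlD a x) = fun x => Complex.exp (-(η * mlS a x)) * F' η x := by
        ext x
        simp only [hF']
        rw [← mul_assoc (Complex.exp _), ← Complex.exp_add]; simp
      rw [this]
      apply AEStronglyMeasurable.mul _ (hF'meas η hη)
      apply Continuous.aestronglyMeasurable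
      fun_prop
    have hzero : ∫ x, F' η x = 0 := by
      apply integral_eq_zero_of_hasDerivAt_of_integrable (hGd η hη) hint
      have := ml_comp_cont ha ha2 hη hqc
      apply ml_integrable ha hη (n := 1) (C := C * 2) (this.mul hSc).aestronglyMeasurable
      intro x
      rw [Pi.mul_apply, norm_mul]
      have e1 := (hC' η (by linarith) x).1
      have e4 := mlS_norm_le ha ha2 x
      calc _ ≤ C * (2 * (1 + |x|)) := by gcongr
        _ = _ := by ring
    have := (hasDerivAt_integral_of_dominated_loc_of_deriv_le (μ := volume) (𝕜 := ℝ)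
      (F := fun η x => Complex.exp (η * mlS a x) * (q (η * mlS a x) * (η * mlD a x)))
      (F' := F') (x₀ := η) (s := Icc (η / 2) (2 * η))
      (bound := fun x => Real.exp (4 * a * η) * ((16 * η * C + 2 * C)) * ((1 + |x|) ^ 1 * Real.exp (-(a * (η / 2)) * |x|)))
      (Icc_mem_nhds (by linarith) (by linarith)) ?_ ?_ (hF'meas η hη) ?_ ?_ ?_).2
    · rw [hzero] at this
      exact this
    · filter_upwards [lt_mem_nhds hη] with ξ hξ
      have := ml_comp_cont ha ha2 hξ hqc
      apply Continuous.aestronglyMeasurable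
      exact (Complex.continuous_exp.comp (hSc.const_smul (ξ:ℂ))).mul (this.mul (hDc.const_smul (ξ:ℂ)))
    · exact ml_P_integrable ha ha2 hη hqc (n := 0) (C := C) (fun x => by simpa using (hC' η (by linarith) x).1)
    · refine Eventually.of_forall fun x ξ hξ => ?_
      have hξ0 : 0 < ξ := by linarith [hξ.1]
      simp only [hF']
      rw [norm_mul]
      have e1 : ‖Complex.exp (ξ * mlS a x)‖ ≤ Real.exp (4 * a * η) * Real.exp (-(a * (η / 2)) * |x|) := by
        refine (ml_exp_norm ha hξ0 x).trans ?_
        have := abs_nonneg x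
        have h1 := hξ.1
        have h2 := hξ.2
        gcongr ?_ * ?_
        · apply Real.exp_le_exp.2; nlinarith
        · apply Real.exp_le_exp.2
          have : a * (η / 2) * |x| ≤ a * ξ * |x| := by gcongr
          linarith
      calc _ ≤ (Real.exp (4 * a * η) * Real.exp (-(a * (η / 2)) * |x|)) * ((16 * η * C + 2 * C) * (1 + |x|) ^ 1) := by
            gcongr
            exact hbd ξ hξ.1 hξ.2 x
        _ = _ := by ring
    · exact (ml_int_exp 1 (by positivity)).const_mul _
    · exact Eventually.of_forall fun x ξ hξ => hFd ξ (by linarith [hξ.1]) x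
  exact IsOpen.is_const_of_deriv_eq_zero (𝕜 := ℝ) isOpen_Ioi isPreconnected_Ioi
    (fun x hx => (main x hx).differentiableAt.differentiableWithinAt)
    (fun x hx => (main x hx).deriv) hη (show (1:ℝ) ∈ Ioi 0 by simp)

lemma ml_lap_int {v b : ℝ} (hv : -1 < v) (hb : 0 < b) :
    IntegrableOn (fun x : ℝ => x ^ v * Real.exp (-b * x)) (Ioi 0) := by
  have := integrableOn_rpow_mul_exp_neg_mul_rpow (p := 1) hv one_pos hb
  simpa using this

lemma ml_lap_contOn (v : ℝ) (r : ℂ) :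
    ContinuousOn (fun x : ℝ => ((x ^ v : ℝ) : ℂ) * Complex.exp (-r * x)) (Ioi 0) := by
  apply ContinuousOn.mul
  · apply Complex.continuous_ofReal.comp_continuousOn
    exact fun x hx => (Real.continuousAt_rpow_const x v (Or.inl (ne_of_gt hx))).continuousWithinAt
  · fun_prop

lemma ml_lap_norm (v : ℝ) (r : ℂ) {x : ℝ} (hx : 0 < x) :
    ‖((x ^ v : ℝ) : ℂ) * Complex.exp (-r * x)‖ = x ^ v * Real.exp (-r.re * x) := by
  rw [norm_mul, Complex.norm_real, Complex.norm_exp, Real.norm_of_nonneg (by positivity)]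
  simp

lemma ml_lap_cint {v : ℝ} {r : ℂ} (hv : -1 < v) (hr : 0 < r.re) :
    IntegrableOn (fun x : ℝ => ((x ^ v : ℝ) : ℂ) * Complex.exp (-r * x)) (Ioi 0) := by
  refine Integrable.mono' (ml_lap_int hv hr) ((ml_lap_contOn v r).aestronglyMeasurable measurableSet_Ioi) ?_
  filter_upwards [ae_restrict_mem measurableSet_Ioi] with x hx
  exact (ml_lap_norm v r hx).le

lemma ml_lap_parts {v : ℝ} {r : ℂ} (hv : -1 < v) (hr : 0 < r.re) :
    (v + 1) * (∫ x in Ioi (0:ℝ), ((x ^ v : ℝ) : ℂ) * Complex.exp (-r * x)) =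
      r * ∫ x in Ioi (0:ℝ), ((x ^ (v + 1) : ℝ) : ℂ) * Complex.exp (-r * x) := by
  have h1 := ml_lap_cint hv hr
  have h2 := ml_lap_cint (v := v + 1) (by linarith) hr
  have key := integral_Ioi_of_hasDerivAt_of_tendsto
    (f := fun x : ℝ => ((x ^ (v + 1) : ℝ) : ℂ) * Complex.exp (-r * x))
    (f' := fun x : ℝ => (v + 1) * (((x ^ v : ℝ) : ℂ) * Complex.exp (-r * x)) - r * (((x ^ (v + 1) : ℝ) : ℂ) * Complex.exp (-r * x)))
    (a := 0) (m := 0) ?_ ?_ ?_ ?_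
  · rw [integral_sub (h1.const_mul _) (h2.const_mul _), integral_const_mul, integral_const_mul] at key
    rw [Real.zero_rpow (by linarith)] at key
    simp only [Complex.ofReal_zero, zero_mul, sub_zero] at key
    exact sub_eq_zero.1 key
  · apply ContinuousWithinAt.mul
    · apply ContinuousAt.continuousWithinAt
      exact Complex.continuous_ofReal.continuousAt.comp (Real.continuousAt_rpow_const 0 (v + 1) (Or.inr (by linarith)))
    · apply Continuous.continuousWithinAt
      fun_prop
  · intro x hx
    have e1 : HasDerivAt (fun x : ℝ => ((x ^ (v + 1) : ℝ) : ℂ)) (((v + 1) * x ^ v : ℝ) : ℂ) x := by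
      have := (Real.hasDerivAt_rpow_const (x := x) (p := v + 1) (Or.inl (ne_of_gt hx))).ofReal_comp
      simpa using this
    have e0 : HasDerivAt (fun x : ℝ => -r * (x : ℂ)) (-r * 1) x :=
      (Complex.ofRealCLM.hasDerivAt (x := x)).const_mul (-r)
    have e2 := e0.cexp
    refine (e1.mul e2).congr_deriv ?_
    push_cast
    ring
  · exact (h1.const_mul _).sub (h2.const_mul _)
  · rw [tendsto_zero_iff_norm_tendsto_zero]
    have : Tendsto (fun x : ℝ => x ^ (v + 1) * Real.exp (-r.re * x)) atTop (𝓝 0) :=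
      tendsto_rpow_mul_exp_neg_mul_atTop_nhds_zero _ _ hr
    refine this.congr' ?_
    filter_upwards [eventually_gt_atTop 0] with x hx
    exact (ml_lap_norm _ r hx).symm

lemma ml_lap_deriv {v : ℝ} {r : ℂ} (hv : -1 < v) (hr : 0 < r.re) :
    HasDerivAt (fun r : ℂ => ∫ x in Ioi (0:ℝ), ((x ^ v : ℝ) : ℂ) * Complex.exp (-r * x))
      (-∫ x in Ioi (0:ℝ), ((x ^ (v + 1) : ℝ) : ℂ) * Complex.exp (-r * x)) r := by
  rw [← integral_neg]
  have hs : {p : ℂ | r.re / 2 < p.re} ∈ 𝓝 r := by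
    apply (isOpen_lt continuous_const Complex.continuous_re).mem_nhds
    simp; linarith
  refine (hasDerivAt_integral_of_dominated_loc_of_deriv_le (𝕜 := ℂ) (μ := volume.restrict (Ioi (0:ℝ)))
    (F := fun (r : ℂ) (x : ℝ) => ((x ^ v : ℝ) : ℂ) * Complex.exp (-r * x))
    (F' := fun (r : ℂ) (x : ℝ) => -(((x ^ (v + 1) : ℝ) : ℂ) * Complex.exp (-r * x)))
    (bound := fun x => x ^ (v + 1) * Real.exp (-(r.re / 2) * x)) hs ?_ ?_ ?_ ?_ ?_ ?_).2
  · exact Eventually.of_forall fun p => (ml_lap_contOn v p).aestronglyMeasurable measurableSet_Ioi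
  · exact ml_lap_cint hv hr
  · exact ((ml_lap_contOn (v + 1) r).aestronglyMeasurable measurableSet_Ioi).neg
  · filter_upwards [ae_restrict_mem measurableSet_Ioi] with x hx p hp
    have hx' : 0 < x := hx
    rw [norm_neg, ml_lap_norm _ _ hx]
    have hp' : r.re / 2 < p.re := hp
    gcongr
  · exact ml_lap_int (by linarith) (by linarith)
  · filter_upwards [ae_restrict_mem measurableSet_Ioi] with x hx p hp
    have hx' : 0 < x := hx
    have e0 : HasDerivAt (fun p : ℂ => -p * (x : ℂ)) (-1 * x) p := ((hasDerivAt_id p).neg).mul_const _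
    refine (e0.cexp.const_mul _).congr_deriv ?_
    rw [Real.rpow_add_one hx'.ne']
    push_cast
    ring

lemma ml_lap {v : ℝ} {r : ℂ} (hv : -1 < v) (hr : 0 < r.re) :
    r ^ ((v : ℂ) + 1) * (∫ x in Ioi (0:ℝ), ((x ^ v : ℝ) : ℂ) * Complex.exp (-r * x)) =
      Complex.Gamma (v + 1) := by
  set U : Set ℂ := {p : ℂ | 0 < p.re}
  have hUo : IsOpen U := isOpen_lt continuous_const Complex.continuous_re
  have hUc : IsPreconnected U := (convex_halfSpace_re_gt 0).isPreconnected
  have hd : ∀ p ∈ U, HasDerivAt (fun r : ℂ => r ^ ((v : ℂ) + 1) * (∫ x in Ioi (0:ℝ), ((x ^ v : ℝ) : ℂ) * Complex.exp (-r * x))) 0 p := by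
    intro p hp
    have hp0 : p ≠ 0 := by rintro rfl; simp [U] at hp
    have h1 := (hasDerivAt_id p).cpow_const (c := (v : ℂ) + 1) (Or.inl hp)
    have h2 := ml_lap_deriv hv hp
    refine (h1.mul h2).congr_deriv ?_
    have h3 := ml_lap_parts hv hp
    simp only [id, mul_one, add_sub_cancel_right]
    rw [mul_comm ((v : ℂ) + 1), mul_assoc, h3, Complex.cpow_add _ _ hp0, Complex.cpow_one]
    ring
  have := IsOpen.is_const_of_deriv_eq_zero hUo hUc (fun p hp => (hd p hp).differentiableAt.differentiableWithinAt)
    (fun p hp => (hd p hp).deriv) (x := r) (y := 1) hr (by simp [U])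
  refine this.trans ?_
  rw [Complex.one_cpow, one_mul, Complex.Gamma_eq_integral (by simp; linarith)]
  apply setIntegral_congr_fun measurableSet_Ioi
  intro x hx
  have hx' : 0 < x := hx
  simp only [add_sub_cancel_right]
  rw [Complex.ofReal_cpow hx'.le]
  push_cast
  ring_nf

/-- One ray. -/
lemma ml_ray {v : ℝ} {V : ℂ} (hv : -1 < v) (hV : V.re < 0) :
    ∫ x in Ioi (0:ℝ), Complex.exp (x * V) * ((x * V) ^ (v : ℂ) * V) =
      Complex.Gamma (v + 1) * Complex.exp ((v + 1) * (Complex.log V - Complex.log (-V))) := by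
  have hV0 : V ≠ 0 := by rintro rfl; simp at hV
  have h := ml_lap (r := -V) hv (by simpa using hV)
  rw [← h]
  rw [Complex.cpow_def_of_ne_zero (neg_ne_zero.2 hV0)]
  have e : Complex.exp (Complex.log (-V) * (v + 1)) * (∫ x in Ioi (0:ℝ), ((x ^ v : ℝ) : ℂ) * Complex.exp (-(-V) * x)) * Complex.exp ((v + 1) * (Complex.log V - Complex.log (-V))) = (V ^ (v : ℂ) * V) * (∫ x in Ioi (0:ℝ), ((x ^ v : ℝ) : ℂ) * Complex.exp (-(-V) * x)) := by
    rw [mul_right_comm, ← Complex.exp_add]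
    congr 1
    have e2 : V ^ (v : ℂ) * V = V ^ ((v : ℂ) + 1) := by
      rw [Complex.cpow_add _ _ hV0, Complex.cpow_one]
    rw [e2, Complex.cpow_def_of_ne_zero hV0]
    ring_nf
  rw [e, ← integral_const_mul]
  apply setIntegral_congr_fun measurableSet_Ioi
  intro x hx
  have hx' : 0 < x := hx
  have hxc : (x : ℂ) ≠ 0 := by exact_mod_cast hx'.ne'
  simp only
  have e1 : ((x : ℂ) * V) ^ (v : ℂ) = ((x ^ v : ℝ) : ℂ) * V ^ (v : ℂ) := by
    rw [Complex.ofReal_cpow hx'.le, Complex.cpow_def_of_ne_zero (mul_ne_zero hxc hV0),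
      Complex.log_ofReal_mul hx' hV0, add_mul, Complex.exp_add, Complex.cpow_def_of_ne_zero hxc,
      Complex.cpow_def_of_ne_zero hV0, Complex.ofReal_log hx'.le]
  rw [e1, neg_neg, mul_comm (x : ℂ) V]
  ring

lemma ml_rays {v a : ℝ} (hv : -1 < v) (hv0 : v < 0) (ha : 0 < a) :
    (∫ x in Ioi (0:ℝ), Complex.exp (x * (Complex.I - a)) * ((x * (Complex.I - a)) ^ (v : ℂ) * (Complex.I - a)))
    - (∫ x in Ioi (0:ℝ), Complex.exp (x * (-Complex.I - a)) * ((x * (-Complex.I - a)) ^ (v : ℂ) * (-Complex.I - a)))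
     = 2 * Real.pi * Complex.I * (Complex.Gamma (-v))⁻¹ := by
  rw [ml_ray hv (by simpa using ha), ml_ray hv (by simpa using ha)]
  have l1 : Complex.log (Complex.I - a) - Complex.log (-(Complex.I - a)) = Real.pi * Complex.I := by
    simp only [Complex.log, norm_neg]
    rw [Complex.arg_neg_eq_arg_sub_pi_of_im_pos (by simp)]
    push_cast; ring
  have l2 : Complex.log (-Complex.I - a) - Complex.log (-(-Complex.I - a)) = -Real.pi * Complex.I := by
    simp only [Complex.log, norm_neg]
    rw [Complex.arg_neg_eq_arg_add_pi_of_im_neg (by simp)]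
    push_cast; ring
  rw [l1, l2]
  have hg := Complex.Gamma_mul_Gamma_one_sub ((v : ℂ) + 1)
  have hG1 : Complex.Gamma ((v : ℂ) + 1) ≠ 0 := Complex.Gamma_ne_zero_of_re_pos (by simp; linarith)
  have hG2 : Complex.Gamma (-(v : ℂ)) ≠ 0 := Complex.Gamma_ne_zero_of_re_pos (by simp; linarith)
  rw [show (1 : ℂ) - (v + 1) = -v by ring] at hg
  have hs : Complex.sin (Real.pi * ((v : ℂ) + 1)) ≠ 0 := by
    intro h0
    rw [h0, div_zero] at hg
    exact (mul_ne_zero hG1 hG2) hg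
  have h2 := Complex.two_sin (Real.pi * ((v : ℂ) + 1))
  rw [eq_div_iff hs] at hg
  have h3 : Complex.Gamma ((v : ℂ) + 1) * Complex.sin (Real.pi * ((v : ℂ) + 1)) = Real.pi * (Complex.Gamma (-(v : ℂ)))⁻¹ := by
    rw [eq_mul_inv_iff_mul_eq₀ hG2]
    linear_combination hg
  have h4 : Complex.exp ((v + 1) * (Real.pi * Complex.I)) - Complex.exp ((v + 1) * (-Real.pi * Complex.I)) = 2 * Complex.I * Complex.sin (Real.pi * ((v : ℂ) + 1)) := by
    rw [show 2 * Complex.I * Complex.sin (Real.pi * ((v : ℂ) + 1)) = Complex.I * (2 * Complex.sin (Real.pi * ((v : ℂ) + 1))) by ring, h2]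
    rw [show ((v : ℂ) + 1) * (Real.pi * Complex.I) = Real.pi * (v + 1) * Complex.I by ring,
      show ((v : ℂ) + 1) * (-Real.pi * Complex.I) = -(Real.pi * (v + 1)) * Complex.I by ring]
    linear_combination (Complex.exp (-(Real.pi * (v + 1)) * Complex.I) - Complex.exp (Real.pi * (v + 1) * Complex.I)) * (-Complex.I_mul_I)
  rw [← mul_sub, h4]
  linear_combination 2 * Complex.I * h3

lemma ml_pow_deriv {a : ℝ} (ha2 : a ≤ 1 / 2) (v : ℝ) {s : ℂ} (hs : s ∈ mlSec a) :
    HasDerivAt (fun s : ℂ => s ^ (v : ℂ)) (v * s ^ ((v - 1 : ℝ) : ℂ)) s := by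
  have := (hasDerivAt_id s).cpow_const (c := (v : ℂ)) (mlSec_slit ha2 hs)
  simpa using this

lemma ml_pow_cont {a : ℝ} (ha2 : a ≤ 1 / 2) (v : ℝ) :
    ContinuousOn (fun s : ℂ => s ^ (v : ℂ)) (mlSec a) :=
  fun _ hs => (ml_pow_deriv ha2 v hs).continuousAt.continuousWithinAt

lemma ml_pow_bound {v r : ℝ} (hv : v ≤ 0) (hr : 0 < r) {s : ℂ} (hs : r ≤ ‖s‖) :
    ‖s ^ (v : ℂ)‖ ≤ r ^ v := by
  rw [Complex.norm_cpow_real]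
  exact Real.rpow_le_rpow_of_nonpos hr hs hv

lemma ml_pow_deform {a v : ℝ} (ha : 0 < a) (ha2 : a ≤ 1 / 2) (hv : v ≤ 0) {η : ℝ} (hη : 0 < η) :
    mlP a (fun s => s ^ (v : ℂ)) η = mlP a (fun s => s ^ (v : ℂ)) 1 := by
  apply ml_deform ha ha2 (fun s hs => ml_pow_deriv ha2 v hs) _ hη
  intro r hr
  refine ⟨max (r ^ v) (|v| * r ^ (v - 1)), fun s _ h => ⟨?_, ?_⟩⟩
  · exact (ml_pow_bound hv hr h).trans (le_max_left _ _)
  · refine le_trans ?_ (le_max_right _ _)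
    rw [norm_mul, Complex.norm_real, Real.norm_eq_abs]
    gcongr
    exact ml_pow_bound (by linarith) hr h

lemma ml_pow_int {a v : ℝ} (ha : 0 < a) (ha2 : a ≤ 1 / 2) (hv : v ≤ 0) {η : ℝ} (hη : 0 < η) :
    Integrable (fun x : ℝ => Complex.exp (η * mlS a x) * ((η * mlS a x) ^ (v : ℂ) * (η * mlD a x))) := by
  apply ml_P_integrable ha ha2 hη (ml_pow_cont ha2 v) (n := 0) (C := (η * (a / 2)) ^ v)
  intro x
  simpa using ml_pow_bound hv (by positivity) (ml_norm_eta ha ha2 hη le_rfl x)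

/-- functional equation -/
lemma ml_fe {a v : ℝ} (ha : 0 < a) (ha2 : a ≤ 1 / 2) (hv : v ≤ 0) :
    mlP a (fun s => s ^ (v : ℂ)) 1 + v * mlP a (fun s => s ^ ((v - 1 : ℝ) : ℂ)) 1 = 0 := by
  have i1 := ml_pow_int ha ha2 hv one_pos
  have i2 := ml_pow_int ha ha2 (show v - 1 ≤ 0 by linarith) one_pos
  unfold mlP
  rw [← integral_const_mul, ← integral_add i1 (i2.const_mul _)]
  apply integral_eq_zero_of_hasDerivAt_of_integrable (f := fun x => Complex.exp (mlS a x) * (mlS a x) ^ (v : ℂ)) _ (i1.add (i2.const_mul _))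
  · have h := ml_integrable ha one_pos (g := fun x => ((1:ℝ) * mlS a x) ^ (v : ℂ)) (n := 0) (C := (1 * (a / 2)) ^ v)
      (ml_comp_cont ha ha2 one_pos (ml_pow_cont ha2 v)).aestronglyMeasurable
      (fun x => by simpa only [pow_zero, mul_one] using ml_pow_bound hv (by positivity) (ml_norm_eta ha ha2 one_pos le_rfl x))
    simpa using h
  · intro x
    have h1 := mlS_hasDerivAt a x
    have h3 := (ml_pow_deriv ha2 v (mlS_sec ha ha2 x)).comp x h1
    refine (h1.cexp.mul h3).congr_deriv ?_
    simp only [Function.comp, Complex.ofReal_one, one_mul, Pi.add_apply]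
    ring

lemma ml_scale_S (a x : ℝ) {η : ℝ} (hη : 0 < η) :
    (η : ℂ) * mlS a (x / η) = ((2 * a * η - a * √(η ^ 2 + x ^ 2) : ℝ) : ℂ) + x * Complex.I := by
  have : η * √(1 + (x / η) ^ 2) = √(η ^ 2 + x ^ 2) := by
    rw [show η ^ 2 + x ^ 2 = η ^ 2 * (1 + (x / η) ^ 2) by field_simp, Real.sqrt_mul (by positivity), Real.sqrt_sq hη.le]
  rw [← this]
  unfold mlS
  have h : (η : ℂ) ≠ 0 := by exact_mod_cast hη.ne'
  push_cast
  field_simp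

lemma ml_scale_D (a x : ℝ) {η : ℝ} (hη : 0 < η) :
    mlD a (x / η) = ((-(a * (x / √(η ^ 2 + x ^ 2))) : ℝ) : ℂ) + Complex.I := by
  have : √(η ^ 2 + x ^ 2) = η * √(1 + (x / η) ^ 2) := by
    rw [show η ^ 2 + x ^ 2 = η ^ 2 * (1 + (x / η) ^ 2) by field_simp, Real.sqrt_mul (by positivity), Real.sqrt_sq hη.le]
  rw [this, div_mul_eq_div_div]
  rfl

lemma ml_abs_int {v b : ℝ} (hv : -1 < v) (hb : 0 < b) :
    Integrable (fun x : ℝ => |x| ^ v * Real.exp (-b * |x|)) := by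
  have h0 : IntegrableOn (fun x : ℝ => |x| ^ v * Real.exp (-b * |x|)) (Ioi 0) := by
    refine (ml_lap_int hv hb).congr_fun (fun x hx => ?_) measurableSet_Ioi
    simp only [abs_of_pos (show 0 < x from hx)]
  rw [← integrableOn_univ, ← @Iio_union_Ici _ _ (0 : ℝ), integrableOn_union,
    integrableOn_Ici_iff_integrableOn_Ioi]
  refine ⟨?_, h0⟩
  rw [← (Measure.measurePreserving_neg (volume : Measure ℝ)).integrableOn_comp_preimage
      (Homeomorph.neg ℝ).measurableEmbedding]
  simpa only [Function.comp_def, abs_neg, neg_preimage, neg_Iio, neg_zero] using h0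

lemma ml_hankel_aux {a v : ℝ} (ha : 0 < a) (ha2 : a ≤ 1 / 2) (hv : -1 < v) (hv0 : v < 0) :
    mlP a (fun s => s ^ (v : ℂ)) 1 = 2 * Real.pi * Complex.I * (Complex.Gamma (-v))⁻¹ := by
  set F : ℝ → ℝ → ℂ := fun η x => Complex.exp (η * mlS a (x / η)) * ((η * mlS a (x / η)) ^ (v : ℂ) * mlD a (x / η)) with hF
  set R : ℝ → ℂ := fun x => ((-(a * |x|) : ℝ) : ℂ) + x * Complex.I with hR
  set f : ℝ → ℂ := fun x => Complex.exp (R x) * ((R x) ^ (v : ℂ) * (((-(a * (x / |x|)) : ℝ) : ℂ) + Complex.I)) with hf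
  have hP : ∀ η : ℝ, 0 < η → ∫ x, F η x = mlP a (fun s => s ^ (v : ℂ)) 1 := by
    intro η hη
    rw [← ml_pow_deform ha ha2 hv0.le hη]
    simp only [hF]
    rw [Measure.integral_comp_div (fun x => Complex.exp (η * mlS a x) * ((η * mlS a x) ^ (v : ℂ) * mlD a x)) η, abs_of_pos hη]
    unfold mlP
    rw [← integral_smul]
    congr 1
    ext x
    rw [Complex.real_smul]
    ring
  have hbound : ∀ η : ℝ, 0 < η → η ≤ 1 → ∀ x, x ≠ 0 → ‖F η x‖ ≤ Real.exp (2 * a) * 2 * (|x| ^ v * Real.exp (-a * |x|)) := by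
    intro η hη hη1 x hx
    have hx' : 0 < |x| := abs_pos.2 hx
    simp only [hF]
    rw [norm_mul, norm_mul]
    have e1 := ml_exp_norm ha hη (x / η)
    have e1' : ‖Complex.exp (η * mlS a (x / η))‖ ≤ Real.exp (2 * a) * Real.exp (-a * |x|) := by
      refine e1.trans ?_
      rw [abs_div, abs_of_pos hη]
      rw [show -(a * η) * (|x| / η) = -a * |x| by field_simp]
      gcongr ?_ * _
      apply Real.exp_le_exp.2
      nlinarith
    have e2 := mlD_norm_le ha ha2 (x / η)
    have e3 : ‖((η : ℂ) * mlS a (x / η)) ^ (v : ℂ)‖ ≤ |x| ^ v := by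
      apply ml_pow_bound hv0.le hx'
      rw [norm_mul, Complex.norm_real, Real.norm_of_nonneg hη.le]
      have := mlS_abs_le a (x / η)
      rw [abs_div, abs_of_pos hη, div_le_iff₀ hη] at this
      linarith
    calc _ ≤ (Real.exp (2 * a) * Real.exp (-a * |x|)) * (|x| ^ v * 2) := by gcongr
      _ = _ := by ring
  have hpt : ∀ x, x ≠ 0 → Tendsto (fun η => F η x) (𝓝[>] 0) (𝓝 (f x)) := by
    intro x hx
    have hx2 : 0 < x ^ 2 := by positivity
    set A : ℝ → ℂ := fun η => ((2 * a * η - a * √(η ^ 2 + x ^ 2) : ℝ) : ℂ) + x * Complex.I with hA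
    have hAc : ContinuousAt A 0 := by
      apply Continuous.continuousAt; simp only [hA]; fun_prop
    have hA0 : A 0 = R x := by
      simp [hA, hR, Real.sqrt_sq_eq_abs]
    have hBc : ContinuousAt (fun η : ℝ => ((-(a * (x / √(η ^ 2 + x ^ 2))) : ℝ) : ℂ) + Complex.I) 0 := by
      apply Continuous.continuousAt
      have : ∀ η : ℝ, √(η ^ 2 + x ^ 2) ≠ 0 := fun η => by positivity
      fun_prop (disch := exact this _)
    have hsl : A 0 ∈ Complex.slitPlane := by
      rw [Complex.mem_slitPlane_iff]; right
      simp [hA, -Complex.ofReal_sub, hx]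
    have hcont : ContinuousAt (fun η => Complex.exp (A η) * ((A η) ^ (v : ℂ) * (((-(a * (x / √(η ^ 2 + x ^ 2))) : ℝ) : ℂ) + Complex.I))) 0 := by
      exact hAc.cexp.mul ((hAc.cpow continuousAt_const hsl).mul hBc)
    have ht := hcont.tendsto.mono_left (nhdsWithin_le_nhds (s := Ioi 0))
    simp only [hA0] at ht
    rw [show (0:ℝ) ^ 2 + x ^ 2 = x ^ 2 by ring, Real.sqrt_sq_eq_abs] at ht
    refine ht.congr' ?_
    filter_upwards [self_mem_nhdsWithin] with η hη
    simp only [hF, ml_scale_S a x hη, ml_scale_D a x hη, hA]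
  have hne : ∀ᵐ x : ℝ, x ≠ 0 := by
    simp [ae_iff]
  have hcont : ∀ η : ℝ, 0 < η → Continuous (F η) := by
    intro η hη
    have h0 : Continuous (fun x : ℝ => Complex.exp (η * mlS a x) * ((η * mlS a x) ^ (v : ℂ) * mlD a x)) := by
      have h1 := ml_comp_cont ha ha2 hη (ml_pow_cont ha2 v)
      exact (Complex.continuous_exp.comp ((mlS_continuous a).const_smul (η:ℂ))).mul (h1.mul (mlD_continuous a))
    exact h0.comp (continuous_id.div_const η)
  have hbi : Integrable (fun x : ℝ => Real.exp (2 * a) * 2 * (|x| ^ v * Real.exp (-a * |x|))) := (ml_abs_int hv ha).const_mul _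
  have hIoc : ∀ᶠ η : ℝ in 𝓝[>] 0, 0 < η ∧ η ≤ 1 := by
    filter_upwards [Ioc_mem_nhdsGT one_pos] with η hη using hη
  have hlim : Tendsto (fun η => ∫ x, F η x) (𝓝[>] 0) (𝓝 (∫ x, f x)) := by
    refine tendsto_integral_filter_of_dominated_convergence _ ?_ ?_ hbi ?_
    · filter_upwards [hIoc] with η hη using (hcont η hη.1).aestronglyMeasurable
    · filter_upwards [hIoc] with η hη
      filter_upwards [hne] with x hx using hbound η hη.1 hη.2 x hx
    · filter_upwards [hne] with x hx using hpt x hx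
  have hval : mlP a (fun s => s ^ (v : ℂ)) 1 = ∫ x, f x := by
    refine tendsto_nhds_unique ?_ hlim
    refine tendsto_const_nhds.congr' ?_
    filter_upwards [self_mem_nhdsWithin] with η hη using (hP η hη).symm
  rw [hval]
  have hfm : AEStronglyMeasurable f volume := by
    apply Measurable.aestronglyMeasurable
    simp only [hf, hR]
    fun_prop
  have hfi : Integrable f := by
    refine hbi.mono' hfm ?_
    filter_upwards [hne] with x hx
    refine le_of_tendsto (hpt x hx).norm ?_
    filter_upwards [hIoc] with η hη using hbound η hη.1 hη.2 x hx
  rw [← intervalIntegral.integral_Iic_add_Ioi hfi.integrableOn (b := 0) hfi.integrableOn, ← ml_rays hv hv0 ha]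
  have h1 : ∫ x in Iic (0:ℝ), f x = -(∫ x in Ioi (0:ℝ), Complex.exp (x * (-Complex.I - a)) * ((x * (-Complex.I - a)) ^ (v : ℂ) * (-Complex.I - a))) := by
    have := integral_comp_neg_Iic 0 (fun x => f (-x))
    simp only [neg_neg, neg_zero] at this
    rw [this, ← integral_neg]
    apply setIntegral_congr_fun measurableSet_Ioi
    intro x hx
    have hx' : 0 < x := hx
    have e : R (-x) = x * (-Complex.I - a) := by
      simp only [hR, abs_neg, abs_of_pos hx']; push_cast; ring
    simp only [hf, e, abs_neg, abs_of_pos hx']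
    rw [neg_div, div_self hx'.ne']
    push_cast; ring
  have h2 : ∫ x in Ioi (0:ℝ), f x = (∫ x in Ioi (0:ℝ), Complex.exp (x * (Complex.I - a)) * ((x * (Complex.I - a)) ^ (v : ℂ) * (Complex.I - a))) := by
    apply setIntegral_congr_fun measurableSet_Ioi
    intro x hx
    have hx' : 0 < x := hx
    have e : R x = x * (Complex.I - a) := by
      simp only [hR, abs_of_pos hx']; push_cast; ring
    simp only [hf, e, abs_of_pos hx']
    rw [div_self hx'.ne']
    push_cast; ring
  rw [h1, h2]
  ring

lemma ml_hankel_one {a : ℝ} (ha : 0 < a) (ha2 : a ≤ 1 / 2) :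
    mlP a (fun s => s ^ ((-1 : ℝ) : ℂ)) 1 = 2 * Real.pi * Complex.I * (Complex.Gamma (-(-1 : ℝ)))⁻¹ := by
  have hI : ∀ᶠ v : ℝ in 𝓝[>] (-1), -1 < v ∧ v < 0 := by
    filter_upwards [Ioo_mem_nhdsGT (show (-1:ℝ) < 0 by norm_num)] with v hv using hv
  have h1 : Tendsto (fun v : ℝ => mlP a (fun s => s ^ (v : ℂ)) 1) (𝓝[>] (-1)) (𝓝 (mlP a (fun s => s ^ ((-1 : ℝ) : ℂ)) 1)) := by
    unfold mlP
    have hbi := ml_integrable (η := 1) ha one_pos (g := fun x => (((a / 2)⁻¹ * 2 : ℝ) : ℂ)) (n := 0) (C := (a / 2)⁻¹ * 2) (by fun_prop)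
      (fun x => by rw [Complex.norm_real, Real.norm_of_nonneg (by positivity)]; simp)
    refine tendsto_integral_filter_of_dominated_convergence _ ?_ ?_ hbi.norm ?_
    · filter_upwards [hI] with v hv using (ml_pow_int ha ha2 hv.2.le one_pos).1
    · filter_upwards [hI] with v hv
      refine Eventually.of_forall fun x => ?_
      have e1 : ‖((1:ℝ) * mlS a x) ^ (v : ℂ)‖ ≤ (a / 2)⁻¹ := by
        have hm := ml_norm_eta ha ha2 one_pos le_rfl x
        rw [one_mul] at hm
        refine (ml_pow_bound hv.2.le (by positivity) hm).trans ?_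
        rw [← Real.rpow_neg_one]
        exact Real.rpow_le_rpow_of_exponent_ge (by positivity) (by linarith) hv.1.le
      have e2 : ‖((1:ℝ):ℂ) * mlD a x‖ ≤ 2 := by simpa using mlD_norm_le ha ha2 x
      rw [norm_mul, norm_mul (Complex.exp _) (((a / 2)⁻¹ * 2 : ℝ) : ℂ)]
      refine mul_le_mul_of_nonneg_left ?_ (norm_nonneg _)
      rw [norm_mul, Complex.norm_real ((a / 2)⁻¹ * 2), Real.norm_of_nonneg (by positivity)]
      exact mul_le_mul e1 e2 (norm_nonneg _) (by positivity)
    · refine Eventually.of_forall fun x => ?_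
      apply tendsto_const_nhds.mul
      refine Tendsto.mul ?_ tendsto_const_nhds
      have hne : ((1:ℝ):ℂ) * mlS a x ≠ 0 := (mlSec_smul one_pos (mlS_sec ha ha2 x)).1
      have : Continuous (fun v : ℝ => (((1:ℝ):ℂ) * mlS a x) ^ (v : ℂ)) := by
        apply Continuous.const_cpow Complex.continuous_ofReal (Or.inl hne)
      exact (this.tendsto (-1)).mono_left nhdsWithin_le_nhds
  refine tendsto_nhds_unique h1 ?_
  have h2 : Continuous (fun v : ℝ => 2 * Real.pi * Complex.I * (Complex.Gamma (-(v:ℂ)))⁻¹) := by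
    apply continuous_const.mul
    exact Complex.differentiable_one_div_Gamma.continuous.comp (by fun_prop)
  refine ((h2.tendsto (-1)).mono_left nhdsWithin_le_nhds).congr' ?_
  filter_upwards [hI] with v hv using (ml_hankel_aux ha ha2 hv.1 hv.2).symm

lemma ml_hankel {a w : ℝ} (ha : 0 < a) (ha2 : a ≤ 1 / 2) (hw : 0 ≤ w) :
    mlP a (fun s => s ^ ((-w : ℝ) : ℂ)) 1 = 2 * Real.pi * Complex.I * (Complex.Gamma w)⁻¹ := by
  rcases hw.eq_or_lt with rfl | hpos
  · have := ml_fe ha ha2 (le_refl (0:ℝ))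
    simp only [Complex.ofReal_zero, zero_mul, add_zero] at this
    simpa using this
  have key : ∀ n : ℕ, ∀ w : ℝ, 0 < w → w ≤ n + 1 → mlP a (fun s => s ^ ((-w : ℝ) : ℂ)) 1 = 2 * Real.pi * Complex.I * (Complex.Gamma w)⁻¹ := by
    intro n
    induction n with
    | zero =>
      intro w h0 h1
      have h1' : w ≤ 1 := by simpa using h1
      rcases h1'.eq_or_lt with rfl | hlt
      · simpa using ml_hankel_one ha ha2
      · have := ml_hankel_aux (v := -w) ha ha2 (by linarith) (by linarith)
        simpa using this
    | succ n ih =>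
      intro w h0 h1
      push_cast at h1
      by_cases hw1 : w ≤ 1
      · exact ih w h0 (by linarith [(Nat.cast_nonneg n : (0:ℝ) ≤ n)])
      push Not at hw1
      have h2 := ih (w - 1) (by linarith) (by linarith)
      have h3 := ml_fe (v := -(w - 1)) ha ha2 (by linarith)
      rw [h2, show -(w - 1) - 1 = -w by ring] at h3
      have hne : ((w : ℂ) - 1) ≠ 0 := by
        exact_mod_cast (show w - 1 ≠ 0 by linarith)
      have h4 : Complex.Gamma w = (w - 1) * Complex.Gamma ((w - 1 : ℝ) : ℂ) := by
        have := Complex.Gamma_add_one ((w : ℂ) - 1) hne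
        rw [sub_add_cancel] at this
        rw [this]; push_cast; rfl
      rw [h4, mul_inv]
      push_cast at h3 ⊢
      field_simp
      linear_combination -h3
  obtain ⟨n, hn⟩ := exists_nat_ge w
  exact key n w hpos (by linarith)

lemma ml_q_deriv {a ρ : ℝ} {z : ℂ} (ha2 : a ≤ 1 / 2) {s : ℂ} (hs : s ∈ mlSec a)
    (h0 : s ^ (ρ : ℂ) - z ≠ 0) :
    HasDerivAt (fun s : ℂ => s ^ ((ρ - 1 : ℝ) : ℂ) / (s ^ (ρ : ℂ) - z))
      (((ρ - 1 : ℝ) * s ^ ((ρ - 1 - 1 : ℝ) : ℂ)) / (s ^ (ρ : ℂ) - z)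
        - s ^ ((ρ - 1 : ℝ) : ℂ) * (ρ * s ^ ((ρ - 1 : ℝ) : ℂ)) / (s ^ (ρ : ℂ) - z) ^ 2) s := by
  refine ((ml_pow_deriv ha2 (ρ - 1) hs).div ((ml_pow_deriv ha2 ρ hs).sub_const z) h0).congr_deriv ?_
  field_simp

lemma ml_q_deform {a ρ d : ℝ} {z : ℂ} (ha : 0 < a) (ha2 : a ≤ 1 / 2) (hρ : 0 < ρ) (hρ1 : ρ ≤ 1)
    (hd : 0 < d) (hsec : ∀ s ∈ mlSec a, d ≤ ‖s ^ (ρ : ℂ) - z‖) {η : ℝ} (hη : 0 < η) :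
    mlP a (fun s => s ^ ((ρ - 1 : ℝ) : ℂ) / (s ^ (ρ : ℂ) - z)) η
      = mlP a (fun s => s ^ ((ρ - 1 : ℝ) : ℂ) / (s ^ (ρ : ℂ) - z)) 1 := by
  have hne : ∀ s ∈ mlSec a, s ^ (ρ : ℂ) - z ≠ 0 := fun s hs => by
    rw [← norm_pos_iff]; exact hd.trans_le (hsec s hs)
  apply ml_deform ha ha2 (fun s hs => ml_q_deriv ha2 hs (hne s hs)) _ hη
  intro r hr
  refine ⟨max (r ^ (ρ - 1) / d) (|ρ - 1| * r ^ (ρ - 1 - 1) / d + r ^ (ρ - 1) * (ρ * r ^ (ρ - 1)) / d ^ 2),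
    fun s hs h => ⟨?_, ?_⟩⟩
  · refine le_trans ?_ (le_max_left _ _)
    rw [norm_div]
    exact div_le_div₀ (by positivity) (ml_pow_bound (by linarith) hr h) hd (hsec s hs)
  · refine le_trans ?_ (le_max_right _ _)
    refine (norm_sub_le _ _).trans ?_
    have b1 := ml_pow_bound (show ρ - 1 ≤ 0 by linarith) hr h
    have b2 := ml_pow_bound (show ρ - 1 - 1 ≤ 0 by linarith) hr h
    have b3 := hsec s hs
    rw [norm_div, norm_div, norm_mul, norm_mul, norm_mul, norm_pow, Complex.norm_real,
      Complex.norm_real, Real.norm_eq_abs, Real.norm_of_nonneg hρ.le]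
    gcongr

lemma ml_rep {a ρ d : ℝ} {z : ℂ} (ha : 0 < a) (ha2 : a ≤ 1 / 2) (hρ : 0 < ρ) (hρ1 : ρ ≤ 1)
    (hd : 0 < d) (hsec : ∀ s ∈ mlSec a, d ≤ ‖s ^ (ρ : ℂ) - z‖) :
    2 * Real.pi * Complex.I * mittagLeffler ρ z
      = mlP a (fun s => s ^ ((ρ - 1 : ℝ) : ℂ) / (s ^ (ρ : ℂ) - z)) 1 := by
  set m : ℝ := (2 * ‖z‖ + 1) ^ (1 / ρ) with hm
  have hm0 : 0 < m := by positivity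
  have hmρ : m ^ ρ = 2 * ‖z‖ + 1 := by
    rw [hm, ← Real.rpow_mul (by positivity), one_div_mul_cancel hρ.ne', Real.rpow_one]
  set η : ℝ := m / (a / 2) with hηd
  have hη : 0 < η := by positivity
  have hnorm : ∀ x, m ≤ ‖(η : ℂ) * mlS a x‖ := fun x => by
    have := ml_norm_eta ha ha2 hη le_rfl x
    rwa [hηd, div_mul_cancel₀ _ (by positivity)] at this
  have hs : ∀ x, (η : ℂ) * mlS a x ∈ mlSec a := fun x => mlSec_smul hη (mlS_sec ha ha2 x)
  rw [← ml_q_deform ha ha2 hρ hρ1 hd hsec hη]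
  set F : ℕ → ℝ → ℂ := fun k x => z ^ k * (Complex.exp (η * mlS a x) *
    ((η * mlS a x) ^ ((-(ρ * k + 1) : ℝ) : ℂ) * (η * mlD a x))) with hF
  have hpow : ∀ (k : ℕ) (s : ℂ), s ≠ 0 → s ^ ((-(ρ * k + 1) : ℝ) : ℂ) = s⁻¹ * ((s ^ (ρ : ℂ)) ^ k)⁻¹ := by
    intro k s hs0
    rw [← Complex.cpow_mul_nat, ← Complex.cpow_neg, ← Complex.cpow_neg_one, ← Complex.cpow_add _ _ hs0]
    congr 1
    push_cast; ring
  have hratio : ∀ x, ‖z / ((η : ℂ) * mlS a x) ^ (ρ : ℂ)‖ ≤ 1 / 2 := by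
    intro x
    rw [norm_div, Complex.norm_cpow_real]
    have h1 : 2 * ‖z‖ + 1 ≤ ‖(η : ℂ) * mlS a x‖ ^ ρ := by
      rw [← hmρ]; exact Real.rpow_le_rpow hm0.le (hnorm x) hρ.le
    have := norm_nonneg z
    rw [div_le_iff₀ (by linarith)]
    linarith
  have hint : ∀ k, Integrable (F k) := fun k =>
    (ml_pow_int ha ha2 (show -(ρ * k + 1) ≤ 0 by have : 0 ≤ ρ * k := by positivity
                                                 linarith) hη).const_mul _
  have hval : ∀ k, ∫ x, F k x = 2 * Real.pi * Complex.I * (z ^ k / Complex.Gamma (ρ * k + 1)) := by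
    intro k
    have h0 : 0 ≤ ρ * k + 1 := by positivity
    simp only [hF]
    rw [integral_const_mul]
    have h1 := ml_pow_deform ha ha2 (v := -(ρ * k + 1)) (by linarith) hη
    rw [ml_hankel ha ha2 h0] at h1
    unfold mlP at h1
    rw [h1]
    push_cast
    ring
  have hei : Integrable (fun x : ℝ => ‖Complex.exp (η * mlS a x) * 1‖) :=
    (ml_integrable (η := η) ha hη (g := fun x => (1 : ℂ)) (n := 0) (C := 1) (by fun_prop) (by simp)).norm
  have hnb : ∀ k x, ‖F k x‖ ≤ (1 / 2) ^ k * (m⁻¹ * (η * 2) * ‖Complex.exp (η * mlS a x) * 1‖) := by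
    intro k x
    have hs0 := (hs x).1
    simp only [hF]
    rw [hpow k _ hs0, mul_one]
    have e : z ^ k * (Complex.exp (η * mlS a x) * (((η:ℂ) * mlS a x)⁻¹ * ((((η:ℂ) * mlS a x) ^ (ρ : ℂ)) ^ k)⁻¹ * (η * mlD a x)))
      = (z / ((η : ℂ) * mlS a x) ^ (ρ : ℂ)) ^ k * (((η:ℂ) * mlS a x)⁻¹ * (η * mlD a x) * Complex.exp (η * mlS a x)) := by
      rw [div_pow]; ring
    rw [e, norm_mul, norm_pow, norm_mul, norm_mul, norm_inv, norm_mul (η : ℂ) (mlD a x), Complex.norm_real,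
      Real.norm_of_nonneg hη.le]
    have b1 := mlD_norm_le ha ha2 x
    have b2 := hratio x
    have b3 := hnorm x
    gcongr
  have hsum : Summable fun k => ∫ x, ‖F k x‖ := by
    refine Summable.of_nonneg_of_le (fun k => integral_nonneg fun x => norm_nonneg _)
      (fun k => integral_mono (hint k).norm ((hei.const_mul _).const_mul _) (hnb k)) ?_
    simp only [integral_const_mul]
    exact (summable_geometric_of_lt_one (by norm_num) (by norm_num)).mul_right _
  have key := hasSum_integral_of_summable_integral_norm hint hsum
  have hpt : ∀ x, ∑' k, F k x = Complex.exp (η * mlS a x) *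
      ((((η:ℂ) * mlS a x) ^ ((ρ - 1 : ℝ) : ℂ) / (((η:ℂ) * mlS a x) ^ (ρ : ℂ) - z)) * (η * mlD a x)) := by
    intro x
    have hs0 := (hs x).1
    have hw : ((η:ℂ) * mlS a x) ^ (ρ : ℂ) ≠ 0 := by simp [Complex.cpow_eq_zero_iff, hs0]
    have hwz : ((η:ℂ) * mlS a x) ^ (ρ : ℂ) - z ≠ 0 := by
      rw [← norm_pos_iff]; exact hd.trans_le (hsec _ (hs x))
    have hg := (hasSum_geometric_of_norm_lt_one ((hratio x).trans_lt (by norm_num))).mul_left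
      (((η:ℂ) * mlS a x)⁻¹ * (η * mlD a x) * Complex.exp (η * mlS a x))
    have e : (fun k => F k x) = fun k => (((η:ℂ) * mlS a x)⁻¹ * (η * mlD a x) * Complex.exp (η * mlS a x)) *
        (z / ((η : ℂ) * mlS a x) ^ (ρ : ℂ)) ^ k := by
      ext k
      simp only [hF]
      rw [hpow k _ hs0, div_pow]; ring
    rw [e, hg.tsum_eq]
    have e2 : ((η:ℂ) * mlS a x) ^ ((ρ - 1 : ℝ) : ℂ) = ((η:ℂ) * mlS a x) ^ (ρ : ℂ) * ((η:ℂ) * mlS a x)⁻¹ := by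
      rw [Complex.ofReal_sub, Complex.cpow_sub _ _ hs0]; simp [div_eq_mul_inv]
    rw [e2]
    generalize ((η:ℂ) * mlS a x) ^ (ρ : ℂ) = w at *
    have e3 : (1 - z / w)⁻¹ = w / (w - z) := by
      rw [one_sub_div hw, inv_div]
    rw [e3]
    ring
  simp only [hpt, hval] at key
  unfold mlP mittagLeffler
  rw [← tsum_mul_left]
  exact key.tsum_eq

lemma ml_cos_aux {ρ θ : ℝ} (hρ : 0 ≤ ρ) (hρ1 : ρ ≤ 1) (hθ : |θ| ≤ Real.pi) :
    Real.cos θ ≤ Real.cos (ρ * θ) := by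
  rw [← Real.cos_abs θ, ← Real.cos_abs (ρ * θ), abs_mul, abs_of_nonneg hρ]
  apply Real.cos_le_cos_of_nonneg_of_le_pi (by positivity) hθ
  nlinarith [abs_nonneg θ]

lemma ml_sec_pow {a ρ : ℝ} (hρ : 0 < ρ) (hρ1 : ρ ≤ 1) {s : ℂ} (hs : s ∈ mlSec a) :
    s ^ (ρ : ℂ) ∈ mlSec a := by
  obtain ⟨h0, h1⟩ := hs
  have hn : 0 < ‖s‖ := norm_pos_iff.2 h0
  refine ⟨by simp [Complex.cpow_eq_zero_iff, h0], ?_⟩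
  rw [Complex.norm_cpow_real, Complex.cpow_ofReal_re]
  have h2 : -a ≤ Real.cos s.arg := by
    rw [Complex.cos_arg h0, le_div_iff₀ hn]; exact h1
  have h3 := ml_cos_aux hρ.le hρ1 (Complex.abs_arg_le_pi s)
  have h4 : 0 < ‖s‖ ^ ρ := by positivity
  rw [mul_comm s.arg ρ]
  nlinarith

lemma ml_sec_dist {l w : ℂ} (hl : l.re < 0) (hw : w ∈ mlSec (-l.re / (4 * ‖l‖))) :
    -l.re / 2 ≤ ‖w - l‖ := by
  have hn : -l.re ≤ ‖l‖ := by
    have := Complex.abs_re_le_norm l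
    rw [abs_of_neg hl] at this; exact this
  have hl0 : 0 < ‖l‖ := by linarith
  by_cases h : ‖w‖ ≤ 2 * ‖l‖
  · have h1 := hw.2
    have h2 : -l.re / (4 * ‖l‖) * ‖w‖ ≤ -l.re / (4 * ‖l‖) * (2 * ‖l‖) := by
      apply mul_le_mul_of_nonneg_left h
      apply div_nonneg <;> linarith
    have h3 : -l.re / (4 * ‖l‖) * (2 * ‖l‖) = -l.re / 2 := by field_simp; ring
    have h4 := Complex.re_le_norm (w - l)
    rw [Complex.sub_re] at h4
    linarith
  · have := norm_sub_norm_le w l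
    linarith

noncomputable def mlU (t ρ : ℝ) (s : ℂ) : ℂ := Complex.exp (ρ * (Complex.log s - Real.log t))

noncomputable def mlR (t : ℝ) (l : ℂ) (ρ : ℝ) (s : ℂ) : ℂ :=
  s⁻¹ * (mlU t ρ s ^ 2 / (mlU t ρ s - l))

lemma mlU_eq {t : ℝ} (ht : 0 < t) (ρ : ℝ) {s : ℂ} (hs : s ≠ 0) :
    mlU t ρ s = (((t⁻¹ : ℝ) : ℂ) * s) ^ (ρ : ℂ) := by
  have ht' : ((t⁻¹ : ℝ) : ℂ) ≠ 0 := by exact_mod_cast (inv_pos.2 ht).ne'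
  rw [Complex.cpow_def_of_ne_zero (mul_ne_zero ht' hs), Complex.log_ofReal_mul (inv_pos.2 ht) hs,
    Real.log_inv, mlU]
  congr 1
  push_cast; ring

lemma mlU_mul {t : ℝ} (ht : 0 < t) (ρ : ℝ) {s : ℂ} (hs : s ≠ 0) :
    s ^ (ρ : ℂ) = ((t ^ ρ : ℝ) : ℂ) * mlU t ρ s := by
  rw [Complex.cpow_def_of_ne_zero hs, Real.rpow_def_of_pos ht, mlU, Complex.ofReal_exp, ← Complex.exp_add]
  congr 1
  push_cast; ring

lemma mlU_norm {t : ℝ} (ht : 0 < t) {ρ : ℝ} (hρ : 0 ≤ ρ) (hρ1 : ρ ≤ 1) {s : ℂ} (hs : s ≠ 0) :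
    ‖mlU t ρ s‖ ≤ (1 + ‖s‖) * t ^ (-ρ) := by
  have h : ‖mlU t ρ s‖ = ‖s‖ ^ ρ * t ^ (-ρ) := by
    rw [mlU_eq ht ρ hs, Complex.norm_cpow_real, norm_mul, Complex.norm_real,
      Real.norm_of_nonneg (inv_pos.2 ht).le, Real.mul_rpow (inv_pos.2 ht).le (norm_nonneg _),
      Real.inv_rpow ht.le, Real.rpow_neg ht.le]
    ring
  rw [h]
  gcongr
  calc ‖s‖ ^ ρ ≤ (1 + ‖s‖) ^ ρ := by gcongr; linarith
    _ ≤ (1 + ‖s‖) ^ (1:ℝ) := Real.rpow_le_rpow_of_exponent_le (by linarith [norm_nonneg s]) hρ1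
    _ = _ := Real.rpow_one _

lemma mlU_dist {t : ℝ} (ht : 0 < t) {ρ : ℝ} (hρ : 0 < ρ) (hρ1 : ρ ≤ 1) {l s : ℂ} (hl : l.re < 0)
    (hs : s ∈ mlSec (-l.re / (4 * ‖l‖))) : -l.re / 2 ≤ ‖mlU t ρ s - l‖ := by
  rw [mlU_eq ht ρ hs.1]
  exact ml_sec_dist hl (ml_sec_pow hρ hρ1 (mlSec_smul (inv_pos.2 ht) hs))

lemma mlU_deriv (t ρ : ℝ) (s : ℂ) :
    HasDerivAt (fun ρ : ℝ => mlU t ρ s) (mlU t ρ s * (Complex.log s - Real.log t)) ρ := by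
  have h : HasDerivAt (fun ρ : ℝ => (ρ : ℂ) * (Complex.log s - Real.log t)) (1 * (Complex.log s - Real.log t)) ρ :=
    (Complex.ofRealCLM.hasDerivAt (x := ρ)).mul_const _
  simpa [mlU] using h.cexp

lemma mlR_deriv {t ρ : ℝ} {l s : ℂ} (h0 : mlU t ρ s - l ≠ 0) :
    HasDerivAt (fun ρ : ℝ => mlR t l ρ s)
      (s⁻¹ * ((Complex.log s - Real.log t) * mlU t ρ s ^ 2 * ((mlU t ρ s - 2 * l) / (mlU t ρ s - l) ^ 2))) ρ := by
  have h := mlU_deriv t ρ s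
  refine (((h.pow 2).div (h.sub_const l) h0).const_mul s⁻¹).congr_deriv ?_
  simp only [Pi.pow_apply]
  field_simp
  push_cast
  ring

lemma ml_log_bound {c : ℝ} (hc : 0 < c) {s : ℂ} (hs : c ≤ ‖s‖) :
    ‖Complex.log s‖ ≤ (4 + c⁻¹) * (1 + ‖s‖) := by
  have hn : 0 < ‖s‖ := hc.trans_le hs
  have h := Complex.norm_le_abs_re_add_abs_im (Complex.log s)
  rw [Complex.log_re, Complex.log_im] at h
  have h1 := Complex.abs_arg_le_pi s
  have h2 : |Real.log ‖s‖| ≤ ‖s‖ + c⁻¹ := by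
    have hci : 0 < c⁻¹ := inv_pos.2 hc
    rw [abs_le]
    constructor
    · have := Real.log_le_sub_one_of_pos (inv_pos.2 hn)
      rw [Real.log_inv] at this
      have h3 : ‖s‖⁻¹ ≤ c⁻¹ := inv_anti₀ hc hs
      linarith
    · linarith [Real.log_le_sub_one_of_pos hn]
  have := Real.pi_lt_four
  have hci : 0 < c⁻¹ := inv_pos.2 hc
  nlinarith [mul_pos hci hn]

lemma mlR_diff {l : ℂ} (hl : l.re < 0) {c : ℝ} (hc : 0 < c) :
    ∃ K, 0 ≤ K ∧ ∀ t ρ₁ ρ₂ : ℝ, 1 ≤ Real.log t → 1 ≤ t → 0 < ρ₁ → ρ₁ ≤ ρ₂ → ρ₂ ≤ 1 →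
      ∀ s ∈ mlSec (-l.re / (4 * ‖l‖)), c ≤ ‖s‖ →
        ‖mlR t l ρ₁ s - mlR t l ρ₂ s‖ ≤ K * (1 + ‖s‖) ^ 3 * (t ^ (-ρ₁) * t ^ (-ρ₁) * Real.log t * (ρ₂ - ρ₁)) := by
  set δ : ℝ := -l.re / 2 with hδ
  have hδ0 : 0 < δ := by rw [hδ]; linarith
  refine ⟨c⁻¹ * (5 + c⁻¹) * ((1 + ‖l‖ / δ) / δ), by positivity, ?_⟩
  intro t ρ₁ ρ₂ hℓ ht1 h1 h12 h2 s hs hcs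
  have ht : 0 < t := by linarith
  have hdist : ∀ ρ ∈ Icc ρ₁ ρ₂, δ ≤ ‖mlU t ρ s - l‖ := fun ρ hρ =>
    mlU_dist ht (h1.trans_le hρ.1) (hρ.2.trans h2) hl hs
  have hne : ∀ ρ ∈ Icc ρ₁ ρ₂, mlU t ρ s - l ≠ 0 := fun ρ hρ => by
    rw [← norm_pos_iff]; exact hδ0.trans_le (hdist ρ hρ)
  have hM : ‖Complex.log s - Real.log t‖ ≤ (5 + c⁻¹) * (1 + ‖s‖) * Real.log t := by
    refine (norm_sub_le _ _).trans ?_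
    rw [Complex.norm_real, Real.norm_of_nonneg (by linarith)]
    have := ml_log_bound hc hcs
    have h3 : (4 + c⁻¹) * (1 + ‖s‖) ≤ (4 + c⁻¹) * (1 + ‖s‖) * Real.log t :=
      le_mul_of_one_le_right (by positivity) hℓ
    have h4 : Real.log t ≤ (1 + ‖s‖) * Real.log t :=
      le_mul_of_one_le_left (by linarith) (by linarith [norm_nonneg s])
    nlinarith
  have hb : ∀ ρ ∈ Icc ρ₁ ρ₂, ‖s⁻¹ * ((Complex.log s - Real.log t) * mlU t ρ s ^ 2 * ((mlU t ρ s - 2 * l) / (mlU t ρ s - l) ^ 2))‖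
      ≤ c⁻¹ * (((5 + c⁻¹) * (1 + ‖s‖) * Real.log t) * ((1 + ‖s‖) * t ^ (-ρ₁)) ^ 2 * ((1 + ‖l‖ / δ) / δ)) := by
    intro ρ hρ
    have b1 : ‖mlU t ρ s‖ ≤ (1 + ‖s‖) * t ^ (-ρ₁) := by
      refine (mlU_norm ht (h1.le.trans hρ.1) (hρ.2.trans h2) hs.1).trans ?_
      gcongr
      exact hρ.1
    have b2 : ‖(mlU t ρ s - 2 * l) / (mlU t ρ s - l) ^ 2‖ ≤ (1 + ‖l‖ / δ) / δ := by
      have e : (mlU t ρ s - 2 * l) / (mlU t ρ s - l) ^ 2 = (1 - l / (mlU t ρ s - l)) / (mlU t ρ s - l) := by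
        have := hne ρ hρ
        field_simp
        ring
      rw [e, norm_div]
      have hd := hdist ρ hρ
      have : ‖1 - l / (mlU t ρ s - l)‖ ≤ 1 + ‖l‖ / δ := by
        refine (norm_sub_le _ _).trans ?_
        rw [norm_one, norm_div]
        gcongr
      gcongr
    have b3 : ‖s⁻¹‖ ≤ c⁻¹ := by rw [norm_inv]; exact inv_anti₀ hc hcs
    have hℓ0 : 0 ≤ Real.log t := by linarith
    rw [norm_mul, norm_mul, norm_mul, norm_pow]
    gcongr
  have := (convex_Icc ρ₁ ρ₂).norm_image_sub_le_of_norm_hasDerivWithin_le (f := fun ρ => mlR t l ρ s)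
    (fun ρ hρ => (mlR_deriv (hne ρ hρ)).hasDerivWithinAt) hb (right_mem_Icc.2 h12) (left_mem_Icc.2 h12)
  refine this.trans (le_of_eq ?_)
  rw [Real.norm_eq_abs, abs_sub_comm, abs_of_nonneg (by linarith)]
  ring

lemma ml_main_eq {l : ℂ} (hl : l.re < 0) {a : ℝ} (haE : a = -l.re / (4 * ‖l‖)) (ha : 0 < a) (ha2 : a ≤ 1 / 2)
    {t ρ : ℝ} (ht : 0 < t) (hρ : 0 < ρ) (hρ1 : ρ ≤ 1) :
    Integrable (fun x : ℝ => Complex.exp ((1:ℝ) * mlS a x) * (mlR t l ρ ((1:ℝ) * mlS a x) * ((1:ℝ) * mlD a x))) ∧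
    -l * (2 * Real.pi * Complex.I * mittagLeffler ρ (l * ((t ^ ρ : ℝ) : ℂ))) =
      2 * Real.pi * Complex.I * ((t ^ (-ρ) * (Real.Gamma (1 - ρ))⁻¹ : ℝ) : ℂ) - mlP a (mlR t l ρ) 1 := by
  have htρ : 0 < t ^ ρ := by positivity
  set z : ℂ := l * ((t ^ ρ : ℝ) : ℂ) with hz
  have hl0 : l ≠ 0 := by rintro rfl; simp at hl
  have hfac : ∀ s ∈ mlSec a, s ^ (ρ : ℂ) - z = ((t ^ ρ : ℝ) : ℂ) * (mlU t ρ s - l) := fun s hs => by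
    rw [mlU_mul ht ρ hs.1, hz]; ring
  have hdist : ∀ s ∈ mlSec a, -l.re / 2 ≤ ‖mlU t ρ s - l‖ := fun s hs =>
    mlU_dist ht hρ hρ1 hl (haE ▸ hs)
  have hd : 0 < t ^ ρ * (-l.re / 2) := mul_pos htρ (by linarith)
  have hsec : ∀ s ∈ mlSec a, t ^ ρ * (-l.re / 2) ≤ ‖s ^ (ρ : ℂ) - z‖ := fun s hs => by
    rw [hfac s hs, norm_mul, Complex.norm_real, Real.norm_of_nonneg htρ.le]
    have := hdist s hs
    gcongr
  have hne : ∀ s ∈ mlSec a, s ^ (ρ : ℂ) - z ≠ 0 := fun s hs => by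
    rw [← norm_pos_iff]; exact hd.trans_le (hsec s hs)
  have hrep := ml_rep ha ha2 hρ hρ1 hd hsec
  have hS : ∀ x, ((1:ℝ):ℂ) * mlS a x ∈ mlSec a := fun x => mlSec_smul one_pos (mlS_sec ha ha2 x)
  have iq : Integrable (fun x : ℝ => Complex.exp ((1:ℝ) * mlS a x) *
      ((((1:ℝ):ℂ) * mlS a x) ^ ((ρ - 1 : ℝ) : ℂ) / ((((1:ℝ):ℂ) * mlS a x) ^ (ρ : ℂ) - z) * ((1:ℝ) * mlD a x))) := by
    refine ml_P_integrable ha ha2 one_pos (q := fun s => s ^ ((ρ - 1 : ℝ) : ℂ) / (s ^ (ρ : ℂ) - z))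
      (fun s hs => (ml_q_deriv ha2 hs (hne s hs)).continuousAt.continuousWithinAt) (n := 0)
      (C := (1 * (a / 2)) ^ (ρ - 1) / (t ^ ρ * (-l.re / 2))) ?_
    intro x
    rw [norm_div, pow_zero, mul_one]
    exact div_le_div₀ (by positivity) (ml_pow_bound (by linarith) (by positivity) (ml_norm_eta ha ha2 one_pos le_rfl x)) hd (hsec _ (hS x))
  have ip := ml_pow_int ha ha2 (show ρ - 1 ≤ 0 by linarith) one_pos
  have hpt : ∀ s ∈ mlSec a, mlR t l ρ s = ((t ^ (-ρ) : ℝ) : ℂ) * s ^ ((ρ - 1 : ℝ) : ℂ) + l * (s ^ ((ρ - 1 : ℝ) : ℂ) / (s ^ (ρ : ℂ) - z)) := by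
    intro s hs
    have e2 : s ^ ((ρ - 1 : ℝ) : ℂ) = s ^ (ρ : ℂ) * s⁻¹ := by
      rw [Complex.ofReal_sub, Complex.cpow_sub _ _ hs.1]; simp [div_eq_mul_inv]
    have hu : mlU t ρ s - l ≠ 0 := by
      rw [← norm_pos_iff]; exact lt_of_lt_of_le (by linarith) (hdist s hs)
    have hs0 := hs.1
    have htc : ((t ^ ρ : ℝ) : ℂ) ≠ 0 := by exact_mod_cast htρ.ne'
    rw [hfac s hs, e2, mlU_mul ht ρ hs.1, mlR, Real.rpow_neg ht.le, Complex.ofReal_inv]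
    generalize ((t ^ ρ : ℝ) : ℂ) = T at *
    field_simp
    ring
  have hfun : (fun x : ℝ => Complex.exp ((1:ℝ) * mlS a x) * (mlR t l ρ ((1:ℝ) * mlS a x) * ((1:ℝ) * mlD a x))) =
      fun x : ℝ => ((t ^ (-ρ) : ℝ) : ℂ) * (Complex.exp ((1:ℝ) * mlS a x) * ((((1:ℝ):ℂ) * mlS a x) ^ ((ρ - 1 : ℝ) : ℂ) * ((1:ℝ) * mlD a x)))
        + l * (Complex.exp ((1:ℝ) * mlS a x) *
      ((((1:ℝ):ℂ) * mlS a x) ^ ((ρ - 1 : ℝ) : ℂ) / ((((1:ℝ):ℂ) * mlS a x) ^ (ρ : ℂ) - z) * ((1:ℝ) * mlD a x))) := by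
    ext x
    rw [hpt _ (hS x)]
    ring
  constructor
  · rw [hfun]
    exact (ip.const_mul _).add (iq.const_mul _)
  · have hh := ml_hankel ha ha2 (show 0 ≤ 1 - ρ by linarith)
    rw [neg_sub] at hh
    have hP : mlP a (mlR t l ρ) 1 = ((t ^ (-ρ) : ℝ) : ℂ) * mlP a (fun s => s ^ ((ρ - 1 : ℝ) : ℂ)) 1
        + l * mlP a (fun s => s ^ ((ρ - 1 : ℝ) : ℂ) / (s ^ (ρ : ℂ) - z)) 1 := by
      unfold mlP
      rw [hfun, integral_add (ip.const_mul _) (iq.const_mul _), integral_const_mul, integral_const_mul]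
    rw [hP, hh, hrep, Complex.Gamma_ofReal]
    push_cast
    ring

lemma ml_P_diff {l : ℂ} (hl : l.re < 0) {a : ℝ} (haE : a = -l.re / (4 * ‖l‖)) (ha : 0 < a) (ha2 : a ≤ 1 / 2) :
    ∃ C, 0 ≤ C ∧ ∀ t ρ₁ ρ₂ : ℝ, 1 ≤ Real.log t → 1 ≤ t → 0 < ρ₁ → ρ₁ ≤ ρ₂ → ρ₂ ≤ 1 →
      ‖mlP a (mlR t l ρ₁) 1 - mlP a (mlR t l ρ₂) 1‖ ≤ C * (t ^ (-ρ₁) * t ^ (-ρ₁) * Real.log t * (ρ₂ - ρ₁)) := by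
  obtain ⟨K, hK, hdiff⟩ := mlR_diff hl (show 0 < a / 2 by positivity)
  rw [← haE] at hdiff
  have hB : Integrable (fun x : ℝ => ‖Complex.exp ((1:ℝ) * mlS a x) * (((1 + |x|) ^ 3 : ℝ) : ℂ)‖) := by
    refine (ml_integrable ha one_pos (n := 3) (C := 1) ?_ ?_).norm
    · exact (Continuous.aestronglyMeasurable (by fun_prop))
    · intro x; rw [Complex.norm_real, Real.norm_of_nonneg (by positivity), one_mul]
  refine ⟨(K * 54) * ∫ x : ℝ, ‖Complex.exp ((1:ℝ) * mlS a x) * (((1 + |x|) ^ 3 : ℝ) : ℂ)‖,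
    mul_nonneg (by positivity) (integral_nonneg fun x => norm_nonneg _), ?_⟩
  intro t ρ₁ ρ₂ hℓ ht1 h1 h12 h2
  have ht : 0 < t := by linarith
  set W := t ^ (-ρ₁) * t ^ (-ρ₁) * Real.log t * (ρ₂ - ρ₁) with hW
  have hW0 : 0 ≤ W := by
    have : 0 ≤ ρ₂ - ρ₁ := by linarith
    have : 0 ≤ Real.log t := by linarith
    positivity
  have i1 := (ml_main_eq hl haE ha ha2 ht h1 (h12.trans h2)).1
  have i2 := (ml_main_eq hl haE ha ha2 ht (h1.trans_le h12) h2).1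
  unfold mlP
  rw [← integral_sub i1 i2, mul_right_comm, ← integral_const_mul]
  refine norm_integral_le_of_norm_le (hB.const_mul _) (Eventually.of_forall fun x => ?_)
  have hS : ((1:ℝ):ℂ) * mlS a x ∈ mlSec a := mlSec_smul one_pos (mlS_sec ha ha2 x)
  have hd := hdiff t ρ₁ ρ₂ hℓ ht1 h1 h12 h2 _ hS (by simpa using ml_norm_eta ha ha2 one_pos le_rfl x)
  rw [← hW] at hd
  have hn : ‖((1:ℝ):ℂ) * mlS a x‖ ≤ 2 * (1 + |x|) := by simpa using mlS_norm_le ha ha2 x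
  have hD : ‖((1:ℝ):ℂ) * mlD a x‖ ≤ 2 := by simpa using mlD_norm_le ha ha2 x
  have hn3 : (1 + ‖((1:ℝ):ℂ) * mlS a x‖) ^ 3 ≤ 27 * (1 + |x|) ^ 3 := by
    calc _ ≤ (3 * (1 + |x|)) ^ 3 := by
          apply pow_le_pow_left₀ (by positivity)
          linarith [abs_nonneg x]
      _ = _ := by ring
  rw [← mul_sub, ← sub_mul, norm_mul, norm_mul, norm_mul (Complex.exp _) (((1 + |x|) ^ 3 : ℝ) : ℂ), Complex.norm_real ((1 + |x|) ^ 3), Real.norm_of_nonneg (show 0 ≤ (1 + |x|) ^ 3 by positivity)]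
  calc _ ≤ ‖Complex.exp ((1:ℝ) * mlS a x)‖ * ((K * (27 * (1 + |x|) ^ 3) * W) * 2) := by
        refine mul_le_mul_of_nonneg_left ?_ (norm_nonneg _)
        refine mul_le_mul (hd.trans ?_) hD (norm_nonneg _) (by positivity)
        gcongr
    _ = _ := by ring

lemma ml_inj (β₀ : ℝ) (hβ₀ : 0 < β₀) (l : ℂ) (hl : l.re < 0) :
    ∃ T₀ : ℝ, 1 < T₀ ∧ ∀ t : ℝ, T₀ ≤ t → ∀ ρ₁ ρ₂ : ℝ, β₀ ≤ ρ₁ → ρ₁ < ρ₂ → ρ₂ ≤ 1 →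
      mittagLeffler ρ₁ (l * ((t ^ ρ₁ : ℝ) : ℂ)) ≠ mittagLeffler ρ₂ (l * ((t ^ ρ₂ : ℝ) : ℂ)) := by
  have hn : -l.re ≤ ‖l‖ := by
    have := Complex.abs_re_le_norm l
    rw [abs_of_neg hl] at this; exact this
  have hl0 : 0 < ‖l‖ := by linarith
  obtain ⟨a, haE⟩ : ∃ a, a = -l.re / (4 * ‖l‖) := ⟨_, rfl⟩
  have ha : 0 < a := by rw [haE]; apply div_pos <;> linarith
  have ha2 : a ≤ 1 / 2 := by rw [haE, div_le_iff₀ (by positivity)]; linarith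
  obtain ⟨C, hC, hdiff⟩ := ml_P_diff hl haE ha ha2
  have hlim := (isLittleO_log_rpow_atTop hβ₀).bound (show 0 < 1 / (2 * (C + 1)) by positivity)
  obtain ⟨T, hT⟩ := eventually_atTop.1 hlim
  refine ⟨max T (max 2 (Real.exp 1)), lt_of_lt_of_le (by norm_num) ((le_max_left 2 _).trans (le_max_right _ _)), ?_⟩
  intro t htT ρ₁ ρ₂ h1 h12 h2 heq
  have ht2 : 2 ≤ t := ((le_max_left 2 _).trans (le_max_right _ _)).trans htT
  have hte : Real.exp 1 ≤ t := ((le_max_right _ _).trans (le_max_right _ _)).trans htT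
  have ht : 0 < t := by linarith
  have hℓ : 1 ≤ Real.log t := by rw [Real.le_log_iff_exp_le ht]; exact hte
  have hlog := hT t ((le_max_left _ _).trans htT)
  rw [Real.norm_of_nonneg (by linarith), Real.norm_of_nonneg (by positivity)] at hlog
  have hρ₁ : 0 < ρ₁ := by linarith
  have e1 := (ml_main_eq hl haE ha ha2 ht hρ₁ (h12.le.trans h2)).2
  have e2 := (ml_main_eq hl haE ha ha2 ht (hρ₁.trans h12) h2).2
  have hd := hdiff t ρ₁ ρ₂ hℓ (by linarith) hρ₁ h12.le h2
  set A := t ^ (-ρ₁) * (Real.Gamma (1 - ρ₁))⁻¹ with hA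
  set B := t ^ (-ρ₂) * (Real.Gamma (1 - ρ₂))⁻¹ with hB
  have hAB : mlP a (mlR t l ρ₁) 1 - mlP a (mlR t l ρ₂) 1 = 2 * Real.pi * Complex.I * ((A - B : ℝ) : ℂ) := by
    rw [heq, e2] at e1
    push_cast
    linear_combination e1
  have hnorm : ‖2 * Real.pi * Complex.I * ((A - B : ℝ) : ℂ)‖ = 2 * Real.pi * |A - B| := by
    rw [norm_mul, Complex.norm_real]
    simp [abs_of_pos Real.pi_pos]
  rw [hAB, hnorm] at hd
  have hg := ml_gamma_mono (x := 1 - ρ₂) (y := 1 - ρ₁) (by linarith) (by linarith) (by linarith)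
  have hg2 : 0 ≤ (Real.Gamma (1 - ρ₂))⁻¹ := inv_nonneg.2 (Real.Gamma_nonneg_of_nonneg (by linarith))
  have hp1 : 0 < t ^ (-ρ₁) := by positivity
  have hp : t ^ (-ρ₂) ≤ t ^ (-ρ₁) := Real.rpow_le_rpow_of_exponent_le (by linarith) (by linarith)
  have hlow : t ^ (-ρ₁) * (1 / 2 * (ρ₂ - ρ₁)) ≤ A - B := by
    rw [hA, hB]; nlinarith
  have habs := le_abs_self (A - B)
  have hpi : 1 ≤ 2 * Real.pi := by linarith [Real.pi_gt_three]
  have hup : t ^ (-ρ₁) * (1 / 2 * (ρ₂ - ρ₁)) ≤ C * (t ^ (-ρ₁) * t ^ (-ρ₁) * Real.log t * (ρ₂ - ρ₁)) := by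
    refine le_trans ?_ hd
    nlinarith [abs_nonneg (A - B)]
  have hup2 : 1 / 2 ≤ C * (t ^ (-ρ₁) * Real.log t) := by
    have hpos : 0 < t ^ (-ρ₁) * (ρ₂ - ρ₁) := mul_pos hp1 (by linarith)
    refine le_of_mul_le_mul_left ?_ hpos
    linarith
  have hsmall : t ^ (-ρ₁) * Real.log t ≤ 1 / (2 * (C + 1)) := by
    have hb : t ^ (-ρ₁) ≤ t ^ (-β₀) := Real.rpow_le_rpow_of_exponent_le (by linarith) (by linarith)
    calc _ ≤ t ^ (-β₀) * (1 / (2 * (C + 1)) * t ^ β₀) := by gcongr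
      _ = _ := by rw [Real.rpow_neg ht.le]; field_simp
  have h3 : C * (t ^ (-ρ₁) * Real.log t) ≤ C * (1 / (2 * (C + 1))) := by gcongr
  have h4 : C * (1 / (2 * (C + 1))) < 1 / 2 := by
    rw [mul_one_div, div_lt_iff₀ (by positivity)]; linarith
  linarith

end MLHelpers

/-- For `0 < β₀ < 1` and `Re λ < 0` there is `T₀ > 1` such that for all `t₀ ≥ T₀`:
any value `b` attained by `ρ ↦ E_ρ(λ t₀^ρ)` on `[β₀, 1)` is attained at a *unique*
point `ρ* ∈ [β₀, 1]`. -/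
theorem caputo_unique_order (β₀ : ℝ) (hβ₀ : 0 < β₀) (hβ₀1 : β₀ < 1)
    (l : ℂ) (hl : l.re < 0) :
    ∃ T₀ : ℝ, 1 < T₀ ∧ ∀ t₀ : ℝ, T₀ ≤ t₀ →
      ∀ b ∈ (fun ρ : ℝ => mittagLeffler ρ (l * ((t₀ ^ ρ : ℝ) : ℂ))) '' Set.Ico β₀ 1,
        ∃! ρ : ℝ, ρ ∈ Set.Icc β₀ 1 ∧
          mittagLeffler ρ (l * ((t₀ ^ ρ : ℝ) : ℂ)) = b := by
  obtain ⟨T₀, hT, h⟩ := ml_inj β₀ hβ₀ l hl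
  refine ⟨T₀, hT, fun t ht b hb => ?_⟩
  obtain ⟨ρ, hρ, rfl⟩ := hb
  refine ⟨ρ, ⟨⟨hρ.1, hρ.2.le⟩, rfl⟩, ?_⟩
  rintro σ ⟨hσ, he⟩
  rcases lt_trichotomy σ ρ with hlt | heq | hgt
  · exact absurd he (h t ht σ ρ hσ.1 hlt hρ.2.le)
  · exact heq
  · exact absurd he.symm (h t ht ρ σ hρ.1 hgt hσ.2)
end

section
/- Let 0 < β₀ < 1 and let λ ∈ ℂ with Re λ < 0 and |Re λ| ≠ |Im λ|. Then there exists T₁ > 1 such that for every t₀ ≥ T₁ the following holds: for every b ∈ ℂ that lies in the image of the half-open interval [β₀, 1) under the map ρ ↦ t₀^{ρ−1}·E_{ρ,ρ}(λ·t₀^ρ), there exists a unique ρ* ∈ [β₀, 1] such that t₀^{ρ*−1}·E_{ρ*,ρ*}(λ·t₀^{ρ*}) = b. -/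
/-- The two-parameter Mittag-Leffler function with equal parameters,
`E_{β,β}(z) = ∑ₖ zᵏ / Γ(βk + β)`. -/
noncomputable def mittagLeffler2 (β : ℝ) (z : ℂ) : ℂ :=
  ∑' k : ℕ, z ^ k / Complex.Gamma (β * k + β)

open Complex MeasureTheory Set Filter Topology

lemma base_int {a c : ℝ} (ha : 0 < a) (hc : 0 < c) :
    Integrable (fun u : ℝ => Real.exp (a * u) * Real.exp (-c * Real.exp u)) := by
  have h := integrableOn_image_iff_integrableOn_abs_deriv_smul (s := univ) (f := Real.exp)
    (f' := Real.exp) MeasurableSet.univ (fun x _ => (Real.hasDerivAt_exp x).hasDerivWithinAt)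
    Real.exp_injective.injOn (fun r : ℝ => r ^ (a - 1) * Real.exp (-c * r))
  rw [image_univ, Real.range_exp, integrableOn_univ] at h
  have h2 := h.1 (by
    have := integrableOn_rpow_mul_exp_neg_mul_rpow (s := a - 1) (p := 1) (b := c) (by linarith)
      one_pos hc
    simpa using this)
  refine h2.congr (ae_of_all _ fun u => ?_)
  simp only [smul_eq_mul, abs_of_pos (Real.exp_pos u)]
  rw [← Real.exp_mul, ← mul_assoc, ← Real.exp_add]
  ring_nf

lemma base_tendsto (a : ℝ) {c : ℝ} (hc : 0 < c) :
    Tendsto (fun u : ℝ => Real.exp (a * u) * Real.exp (-c * Real.exp u)) atTop (𝓝 0) := by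
  have := (tendsto_rpow_mul_exp_neg_mul_atTop_nhds_zero a c hc).comp Real.tendsto_exp_atTop
  refine this.congr fun u => ?_
  simp only [Function.comp]
  rw [← Real.exp_mul, mul_comm u]

lemma gamma_line_zero {a : ℝ} (ha : 0 < a) :
    ∫ u : ℝ, exp (-exp (u : ℂ)) * exp (a * (u : ℂ)) = Gamma a := by
  have h := integral_cpow_mul_exp_neg_mul_Ioi (a := (a : ℂ)) (r := 1) (by simpa) one_pos
  have h3 := integral_image_eq_integral_abs_deriv_smul (s := univ) (f := Real.exp)
    (f' := Real.exp) MeasurableSet.univ (fun x _ => (Real.hasDerivAt_exp x).hasDerivWithinAt)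
    Real.exp_injective.injOn (fun r : ℝ => (r : ℂ) ^ ((a : ℂ) - 1) * exp (-(((1 : ℝ) : ℂ) * r)))
  rw [image_univ, Real.range_exp, Measure.restrict_univ, h] at h3
  have e2 : (∫ u : ℝ, exp (-exp (u : ℂ)) * exp (a * (u : ℂ))) =
      ∫ x : ℝ, |Real.exp x| • ((Real.exp x : ℂ) ^ ((a : ℂ) - 1) *
        exp (-(((1 : ℝ) : ℂ) * (Real.exp x : ℂ)))) := by
    congr 1; ext u
    rw [abs_of_pos (Real.exp_pos u), real_smul, 
      cpow_def_of_ne_zero (ofReal_ne_zero.2 (Real.exp_pos u).ne'), ← ofReal_log (Real.exp_pos u).le,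
      Real.log_exp, ofReal_exp, ← exp_add, ← exp_add, ← exp_add]
    congr 1
    push_cast
    ring
  rw [e2, ← h3]
  simp

lemma norm_G (a u y : ℝ) : ‖exp (-exp ((u : ℂ) + y * I)) * exp (a * ((u : ℂ) + y * I))‖
    = Real.exp (a * u) * Real.exp (-Real.cos y * Real.exp u) := by
  rw [norm_mul, norm_exp, norm_exp, mul_comm, neg_re, exp_re]
  simp [mul_comm]

lemma gamma_line {a : ℝ} (ha : 0 < a) {τ : ℝ} (h1 : -(Real.pi / 2) < τ) (h2 : τ < Real.pi / 2) :
    ∫ u : ℝ, exp (-exp (u + τ * I)) * exp (a * (u + τ * I)) = Gamma a := by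
  have hc : 0 < Real.cos τ := Real.cos_pos_of_mem_Ioo ⟨h1, h2⟩
  set G : ℂ → ℂ := fun w => exp (-exp w) * exp (a * w) with hG
  have hd : Differentiable ℂ G := by fun_prop
  have R : ∀ n : ℝ, (∫ u in (-n)..n, G (u : ℂ)) - (∫ u in (-n)..n, G (u + τ * I))
      + I * (∫ y in (0 : ℝ)..τ, G (n + y * I)) - I * (∫ y in (0 : ℝ)..τ, G (((-n : ℝ) : ℂ) + y * I)) = 0 := by
    intro n
    have := integral_boundary_rect_eq_zero_of_differentiableOn G ((-n : ℝ) : ℂ)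
      (n + τ * I) hd.differentiableOn
    simpa using this
  have bd : ∀ u : ℝ, ∀ y ∈ uIoc 0 τ, ‖G (u + y * I)‖ ≤ Real.exp (a * u) * Real.exp (-Real.cos τ * Real.exp u) := by
    intro u y hy
    rw [hG, norm_G]
    have : Real.cos τ ≤ Real.cos y := by
      rw [← Real.cos_abs τ, ← Real.cos_abs y]
      apply Real.cos_le_cos_of_nonneg_of_le_pi (abs_nonneg _)
      · rw [abs_le]; constructor <;> linarith [Real.pi_pos]
      · rcases mem_uIoc.1 hy with h | h
        · rw [abs_of_pos h.1, abs_of_pos (h.1.trans_le h.2)]; exact h.2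
        · rw [abs_of_nonpos h.2, abs_of_neg (h.1.trans_le h.2)]; linarith [h.1]
    gcongr
  have T0 : Tendsto (fun n : ℝ => I * (∫ y in (0 : ℝ)..τ, G (n + y * I))) atTop (𝓝 0) := by
    apply squeeze_zero_norm (a := fun n => Real.exp (a * n) * Real.exp (-Real.cos τ * Real.exp n) * |τ - 0|)
    · intro n
      rw [norm_mul, norm_I, one_mul]
      exact intervalIntegral.norm_integral_le_of_norm_le_const (bd n)
    · simpa using (base_tendsto a hc).mul_const |τ - 0|
  have T1 : Tendsto (fun n : ℝ => I * (∫ y in (0 : ℝ)..τ, G (((-n : ℝ) : ℂ) + y * I))) atTop (𝓝 0) := by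
    apply squeeze_zero_norm (a := fun n => Real.exp (a * (-n)) * |τ - 0|)
    · intro n
      rw [norm_mul, norm_I, one_mul]
      apply intervalIntegral.norm_integral_le_of_norm_le_const 
      intro y hy
      refine (bd _ y hy).trans (mul_le_of_le_one_right (Real.exp_pos _).le ?_)
      rw [Real.exp_le_one_iff]
      have := mul_pos hc (Real.exp_pos (-n))
      linarith
    · have : Tendsto (fun x' : ℝ => Real.exp (a * (-x'))) atTop (𝓝 0) :=
        Real.tendsto_exp_atBot.comp (tendsto_neg_atTop_atBot.const_mul_atBot ha)
      simpa using this.mul_const |τ - 0|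
  have int : ∀ y : ℝ, 0 < Real.cos y → Integrable (fun u : ℝ => G (u + y * I)) := by
    intro y hy
    refine (base_int ha hy).mono' (by fun_prop) (ae_of_all _ fun u => ?_)
    exact (norm_G a u y).le
  have i0 : Integrable (fun u : ℝ => G u) := by simpa using int 0 (by simp)
  have T2 := intervalIntegral_tendsto_integral i0 tendsto_neg_atTop_atBot tendsto_id
  have T3 := intervalIntegral_tendsto_integral (int τ hc) tendsto_neg_atTop_atBot tendsto_id
  have T := ((T2.sub T3).add T0).sub T1
  have := tendsto_nhds_unique T (tendsto_const_nhds.congr (fun x' => (R x').symm))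
  have h0 := gamma_line_zero ha
  linear_combination h0 - this

/-- integrand on a line -/
noncomputable def KK (w : ℂ) : ℂ := exp (exp w)

noncomputable def Lin (θ : ℝ) (F : ℂ → ℂ) : ℂ :=
  (∫ u : ℝ, F (u + (θ : ℝ) * I)) - ∫ u : ℝ, F (u + ((-θ : ℝ) : ℂ) * I)

noncomputable def Ctr (θ x : ℝ) (F : ℂ → ℂ) : ℂ :=
  (∫ u in Ioi x, F (u + (θ : ℝ) * I)) - (∫ u in Ioi x, F (u + ((-θ : ℝ) : ℂ) * I))
   + I * ∫ y in (-θ)..θ, F (x + y * I)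

lemma lin_gamma {a θ : ℝ} (ha : 0 < a) (h1 : Real.pi / 2 < θ) (h2 : θ < Real.pi) :
    Lin θ (fun w => KK w * exp (a * w)) = 2 * I * Real.sin (Real.pi * a) * Gamma a := by
  have A : ∀ s : ℝ, (s = 1 ∨ s = -1) →
      ∫ u : ℝ, KK (u + ((s * θ : ℝ) : ℂ) * I) * exp (a * (u + ((s * θ : ℝ) : ℂ) * I))
        = exp (a * (s * Real.pi * I)) * Gamma a := by
    intro s hs
    have hτ : -(Real.pi / 2) < s * (θ - Real.pi) ∧ s * (θ - Real.pi) < Real.pi / 2 := by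
      rcases hs with rfl | rfl <;> constructor <;> linarith
    rw [← gamma_line ha hτ.1 hτ.2, ← integral_const_mul]
    congr 1; ext u
    have : exp (u + ((s * θ : ℝ) : ℂ) * I) = - exp (u + ((s * (θ - Real.pi) : ℝ) : ℂ) * I) := by
      have : (u + ((s * θ : ℝ) : ℂ) * I) = (u + ((s * (θ - Real.pi) : ℝ) : ℂ) * I) + s * Real.pi * I := by
        push_cast; ring
      rw [this, exp_add (u + _)]
      rcases hs with rfl | rfl <;> simp [exp_neg]
    rw [KK, this, mul_left_comm, ← exp_add (a * _)]
    congr 2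
    push_cast; ring
  have B := A 1 (Or.inl rfl)
  have C := A (-1) (Or.inr rfl)
  simp only [one_mul, neg_one_mul] at B C
  rw [Lin, B, C]
  rw [ofReal_sin, ofReal_mul, Complex.sin]
  push_cast
  have : I * I = -1 := I_mul_I
  ring_nf
  simp
  ring_nf

lemma norm_KK (u σ : ℝ) : ‖KK (u + σ * I)‖ = Real.exp (Real.cos σ * Real.exp u) := by
  rw [KK, norm_exp, exp_re]
  simp [mul_comm]

lemma con_eq_lin {θ : ℝ} (hθ : 0 < θ) {F : ℂ → ℂ}
    (hF : DifferentiableOn ℂ F {w | |w.im| ≤ θ})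
    (i1 : Integrable (fun u : ℝ => F (u + (θ : ℝ) * I)))
    (i2 : Integrable (fun u : ℝ => F (u + ((-θ : ℝ) : ℂ) * I)))
    {C a : ℝ} (ha : 0 < a) (hb : ∀ w : ℂ, |w.im| ≤ θ → w.re ≤ 0 → ‖F w‖ ≤ C * Real.exp (a * w.re))
    (x : ℝ) : Ctr θ x F = Lin θ F := by
  have R : ∀ x' : ℝ, (∫ u in x'..x, F (u + ((-θ : ℝ) : ℂ) * I)) - (∫ u in x'..x, F (u + (θ : ℝ) * I))
      + I * (∫ y in (-θ)..θ, F (x + y * I)) - I * (∫ y in (-θ)..θ, F (x' + y * I)) = 0 := by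
    intro x'
    have := integral_boundary_rect_eq_zero_of_differentiableOn F (x' + ((-θ : ℝ) : ℂ) * I)
      (x + (θ : ℝ) * I) (hF.mono (by
        intro w hw
        rw [mem_reProdIm] at hw
        have := hw.2
        simp at this
        rw [uIcc_of_le (by linarith)] at this
        exact abs_le.2 this))
    simpa using this
  have T0 : Tendsto (fun x' : ℝ => I * (∫ y in (-θ)..θ, F (x' + y * I))) atBot (𝓝 0) := by
    apply squeeze_zero_norm' (a := fun x' => C * Real.exp (a * x') * |θ - (-θ)|)
    · filter_upwards [eventually_le_atBot 0] with x' hx'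
      rw [norm_mul, norm_I, one_mul]
      apply intervalIntegral.norm_integral_le_of_norm_le_const
      intro y hy
      rw [uIoc_of_le (by linarith)] at hy
      have := hb (x' + y * I) (by simpa using abs_le.2 ⟨hy.1.le, hy.2⟩) (by simpa)
      simpa using this
    · have : Tendsto (fun x' : ℝ => Real.exp (a * x')) atBot (𝓝 0) :=
        Real.tendsto_exp_atBot.comp (tendsto_id.const_mul_atBot ha)
      simpa using (this.const_mul C).mul_const |θ - (-θ)|
  have T1 := intervalIntegral_tendsto_integral_Iic x i1.integrableOn tendsto_id
  have T2 := intervalIntegral_tendsto_integral_Iic x i2.integrableOn tendsto_id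
  have T := ((T2.sub T1).add_const (I * (∫ y in (-θ)..θ, F (x + y * I)))).sub T0
  have := tendsto_nhds_unique T (tendsto_const_nhds.congr (fun x' => (R x').symm))
  rw [Ctr, Lin, ← intervalIntegral.integral_Iic_add_Ioi (b := x) i1.integrableOn i1.integrableOn,
    ← intervalIntegral.integral_Iic_add_Ioi (b := x) i2.integrableOn i2.integrableOn]
  linear_combination this

lemma norm_KF (a u σ : ℝ) : ‖KK (u + σ * I) * exp (a * ((u : ℂ) + σ * I))‖
    = Real.exp (a * u) * Real.exp (-(-Real.cos σ) * Real.exp u) := by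
  rw [norm_mul, norm_KK, norm_exp, mul_comm]
  simp

lemma base_int_Ioi (a x : ℝ) {c : ℝ} (hc : 0 < c) :
    IntegrableOn (fun u : ℝ => Real.exp (a * u) * Real.exp (-c * Real.exp u)) (Ioi x) := by
  have h := ((base_int (a := |a| + 1) (by positivity) hc).const_mul
    (Real.exp ((a - (|a| + 1)) * x))).integrableOn (s := Ioi x)
  refine Integrable.mono' h (by fun_prop) ?_
  rw [ae_restrict_iff' measurableSet_Ioi]
  refine ae_of_all _ fun u hu => ?_
  rw [Real.norm_of_nonneg (by positivity), ← mul_assoc, ← Real.exp_add (_ * x)]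
  refine mul_le_mul_of_nonneg_right (Real.exp_le_exp.2 ?_) (Real.exp_pos _).le
  have : a - (|a| + 1) ≤ 0 := by linarith [le_abs_self a]
  have hu : x < u := hu
  nlinarith

lemma KK_cont : Continuous KK := by unfold KK; fun_prop

lemma KK_diff : Differentiable ℂ KK := by unfold KK; fun_prop

lemma int_KF (a x : ℝ) {σ : ℝ} (hc : Real.cos σ < 0) :
    IntegrableOn (fun u : ℝ => KK (u + σ * I) * exp (a * ((u : ℂ) + σ * I))) (Ioi x) := by
  have := KK_cont
  refine Integrable.mono' (base_int_Ioi a x (c := -Real.cos σ) (by linarith))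
    (by fun_prop) (ae_of_all _ fun u => ?_)
  exact (norm_KF a u σ).le

lemma int_KF_line {a : ℝ} (ha : 0 < a) {σ : ℝ} (hc : Real.cos σ < 0) :
    Integrable (fun u : ℝ => KK (u + σ * I) * exp (a * ((u : ℂ) + σ * I))) := by
  have := KK_cont
  refine Integrable.mono' (base_int ha (c := -Real.cos σ) (by linarith))
    (by fun_prop) (ae_of_all _ fun u => ?_)
  exact (norm_KF a u σ).le

lemma cos_neg_of {θ : ℝ} (h1 : Real.pi / 2 < θ) (h2 : θ < Real.pi) : Real.cos θ < 0 :=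
  Real.cos_neg_of_pi_div_two_lt_of_lt h1 (by linarith [Real.pi_pos])

lemma norm_KK_le {w : ℂ} (hw : w.re ≤ 0) : ‖KK w‖ ≤ Real.exp 1 := by
  rw [KK, norm_exp]
  gcongr
  refine (re_le_norm _).trans ?_
  rw [norm_exp]
  simpa using hw

lemma hankel_pos {θ : ℝ} (h1 : Real.pi / 2 < θ) (h2 : θ < Real.pi) (x : ℝ) {a : ℝ} (ha : 0 < a) :
    Ctr θ x (fun w => KK w * exp (a * w)) = 2 * Real.pi * I * (Gamma (1 - a))⁻¹ := by
  have hc := cos_neg_of h1 h2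
  rw [con_eq_lin (C := Real.exp 1) (a := a) (by linarith [Real.pi_pos]) (by
      have := KK_diff; fun_prop) (int_KF_line ha hc)
      (int_KF_line ha (by rwa [Real.cos_neg])) ha, lin_gamma ha h1 h2]
  · have := Gamma_mul_Gamma_one_sub (a : ℂ)
    have g : Gamma (a : ℂ) ≠ 0 := Gamma_ne_zero_of_re_pos (by simpa)
    rw [ofReal_sin, ofReal_mul]
    by_cases hs : sin (Real.pi * a : ℂ) = 0
    · rw [hs, div_zero] at this
      rcases mul_eq_zero.1 this with h | h
      · exact absurd h g
      · rw [hs, h]; simp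
    · have g2 : Gamma (1 - (a : ℂ)) ≠ 0 := by
        intro h
        rw [h, mul_zero] at this
        have hpi : (Real.pi : ℂ) ≠ 0 := ofReal_ne_zero.2 Real.pi_ne_zero
        exact (div_ne_zero hpi hs) this.symm
      rw [eq_div_iff hs] at this
      field_simp
      linear_combination this
  · intro w _ hw
    rw [norm_mul]
    gcongr
    · exact norm_KK_le hw
    · rw [norm_exp]; simp

lemma hankel_zero {θ : ℝ} (h1 : Real.pi / 2 < θ) (h2 : θ < Real.pi) (x : ℝ) :
    Ctr θ x (fun w => KK w * exp ((0 : ℝ) * w)) = 2 * Real.pi * I * (Gamma (1 - (0 : ℝ)))⁻¹ := by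
  have hc := cos_neg_of h1 h2
  have hK := KK_cont
  have P : ∀ σ : ℝ, Real.cos σ < 0 → Tendsto (fun a : ℝ => ∫ u in Ioi x, KK (u + σ * I) * exp (a * ((u : ℂ) + σ * I)))
      (𝓝[>] 0) (𝓝 (∫ u in Ioi x, KK (u + σ * I) * exp ((0 : ℝ) * ((u : ℂ) + σ * I)))) := by
    intro σ hσ
    refine tendsto_integral_filter_of_dominated_convergence 
      (fun u : ℝ => Real.exp (0 * u) * Real.exp (-(-Real.cos σ) * Real.exp u) +
        Real.exp (1 * u) * Real.exp (-(-Real.cos σ) * Real.exp u)) ?_ ?_ ?_ ?_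
    · refine Eventually.of_forall fun a => ?_
      fun_prop
    · filter_upwards [Ioo_mem_nhdsGT (zero_lt_one' ℝ)] with a ha
      refine ae_of_all _ fun u => ?_
      rw [norm_KF, ← add_mul]
      gcongr
      rcases le_total u 0 with h | h
      · have : Real.exp (a * u) ≤ Real.exp (0 * u) := Real.exp_le_exp.2 (by nlinarith [ha.1])
        linarith [Real.exp_pos (1 * u)]
      · have : Real.exp (a * u) ≤ Real.exp (1 * u) := by gcongr; exact ha.2.le
        linarith [Real.exp_pos (0 * u)]
    · exact (base_int_Ioi 0 x (by linarith)).add (base_int_Ioi 1 x (by linarith))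
    · refine ae_of_all _ fun u => ?_
      apply tendsto_nhdsWithin_of_tendsto_nhds
      apply Continuous.tendsto (f := fun a : ℝ => KK (u + σ * I) * exp (a * ((u : ℂ) + σ * I)))
      fun_prop
  have Q : Tendsto (fun a : ℝ => ∫ y in (-θ)..θ, KK (x + y * I) * exp (a * ((x : ℂ) + y * I)))
      (𝓝[>] 0) (𝓝 (∫ y in (-θ)..θ, KK (x + y * I) * exp ((0 : ℝ) * ((x : ℂ) + y * I)))) := by
    apply tendsto_nhdsWithin_of_tendsto_nhds
    apply Continuous.tendsto (f := fun a : ℝ => ∫ y in (-θ)..θ, KK (x + y * I) * exp (a * ((x : ℂ) + y * I)))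
    apply intervalIntegral.continuous_parametric_intervalIntegral_of_continuous'
    fun_prop
  have T := ((P θ hc).sub (P (-θ) (by rwa [Real.cos_neg]))).add (Q.const_mul I)
  have T' : Tendsto (fun a : ℝ => 2 * Real.pi * I * (Gamma (1 - a))⁻¹) (𝓝[>] 0)
      (𝓝 (2 * Real.pi * I * (Gamma (1 - (0 : ℝ)))⁻¹)) := by
    apply tendsto_nhdsWithin_of_tendsto_nhds
    have := differentiable_one_div_Gamma.continuous
    apply Continuous.tendsto (f := fun a : ℝ => 2 * Real.pi * I * (Gamma (1 - a))⁻¹)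
    have h3 : Continuous (fun a : ℝ => (Gamma (1 - a))⁻¹) := 
      this.comp (g := fun s : ℂ => (Gamma s)⁻¹) (f := fun a : ℝ => (1 - a : ℂ)) (by fun_prop)
    fun_prop
  refine tendsto_nhds_unique T (T'.congr' ?_)
  filter_upwards [self_mem_nhdsWithin] with a ha
  exact (hankel_pos h1 h2 x ha).symm

lemma hankel_rec {θ : ℝ} (h1 : Real.pi / 2 < θ) (h2 : θ < Real.pi) (x a : ℝ) :
    Ctr θ x (fun w => KK w * exp ((a + 1 : ℝ) * w)) + a * Ctr θ x (fun w => KK w * exp (a * w)) = 0 := by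
  have hc := cos_neg_of h1 h2
  have hK := KK_cont
  have hd : ∀ w : ℂ, HasDerivAt (fun w => KK w * exp (a * w))
      (KK w * exp ((a + 1 : ℝ) * w) + a * (KK w * exp (a * w))) w := by
    intro w
    have e1 : HasDerivAt KK (KK w * exp w) w := (Complex.hasDerivAt_exp w).cexp
    have e2 : HasDerivAt (fun w => exp (a * w)) (exp (a * w) * (a * 1)) w :=
      ((hasDerivAt_id w).const_mul (a : ℂ)).cexp
    refine (e1.mul e2).congr_deriv ?_
    push_cast
    rw [add_mul, exp_add, one_mul]; ring
  have P : ∀ σ : ℝ, Real.cos σ < 0 → (∫ u in Ioi x, KK (u + σ * I) * exp ((a + 1 : ℝ) * ((u : ℂ) + σ * I)))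
      + a * (∫ u in Ioi x, KK (u + σ * I) * exp (a * ((u : ℂ) + σ * I)))
      = - (KK (x + σ * I) * exp (a * ((x : ℂ) + σ * I))) := by
    intro σ hσ
    rw [← integral_const_mul, ← integral_add (int_KF _ _ hσ) ((int_KF _ _ hσ).const_mul _)]
    rw [integral_Ioi_of_hasDerivAt_of_tendsto' 
      (f := fun u : ℝ => KK (u + σ * I) * exp (a * ((u : ℂ) + σ * I))) (m := 0)]
    · simp
    · intro u _
      have := (hd (u + σ * I)).comp u ((Complex.ofRealCLM.hasDerivAt (x := u)).add_const (σ * I))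
      refine HasDerivAt.congr_deriv this ?_
      simp
    · exact (int_KF _ _ hσ).add ((int_KF _ _ hσ).const_mul _)
    · rw [tendsto_zero_iff_norm_tendsto_zero]
      simp_rw [norm_KF]
      exact base_tendsto a (by linarith)
  have Q : I * (∫ y in (-θ)..θ, KK (x + y * I) * exp ((a + 1 : ℝ) * ((x : ℂ) + y * I)))
      + a * (I * (∫ y in (-θ)..θ, KK (x + y * I) * exp (a * ((x : ℂ) + y * I))))
      = KK (x + θ * I) * exp (a * ((x : ℂ) + θ * I)) - 
        KK (x + (-θ : ℝ) * I) * exp (a * ((x : ℂ) + (-θ : ℝ) * I)) := by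
    rw [mul_left_comm, ← mul_add, ← intervalIntegral.integral_const_mul, ← intervalIntegral.integral_add
      (Continuous.intervalIntegrable (by fun_prop) _ _) (Continuous.intervalIntegrable (by fun_prop) _ _),
      ← intervalIntegral.integral_const_mul]
    rw [intervalIntegral.integral_eq_sub_of_hasDerivAt
      (f := fun y : ℝ => KK (x + y * I) * exp (a * ((x : ℂ) + y * I)))]
    · intro y _
      have := (hd (x + y * I)).comp y (((Complex.ofRealCLM.hasDerivAt (x := y)).mul_const I).const_add (x : ℂ))
      refine HasDerivAt.congr_deriv this ?_
      simp [mul_comm I]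
    · exact Continuous.intervalIntegrable (by fun_prop) _ _
  have P1 := P θ hc
  have P2 := P (-θ) (by rwa [Real.cos_neg])
  rw [Ctr, Ctr]
  linear_combination P1 - P2 + Q

lemma hankel {θ : ℝ} (h1 : Real.pi / 2 < θ) (h2 : θ < Real.pi) (x a : ℝ) :
    Ctr θ x (fun w => KK w * exp (a * w)) = 2 * Real.pi * I * (Gamma (1 - a))⁻¹ := by
  have key : ∀ n : ℕ, ∀ a : ℝ, -(n : ℝ) ≤ a → 
      Ctr θ x (fun w => KK w * exp (a * w)) = 2 * Real.pi * I * (Gamma (1 - a))⁻¹ := by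
    intro n
    induction n with
    | zero =>
      intro a ha
      simp at ha
      rcases ha.eq_or_lt with rfl | h
      · exact hankel_zero h1 h2 x
      · exact hankel_pos h1 h2 x h
    | succ n ih =>
      intro a ha
      rcases le_or_gt (-(n : ℝ)) a with h | h
      · exact ih a h
      · have r := hankel_rec h1 h2 x a
        push_cast at ha
        rw [ih (a + 1) (by linarith)] at r
        have hn : (0 : ℝ) ≤ n := n.cast_nonneg
        have ha0 : (a : ℂ) ≠ 0 := ofReal_ne_zero.2 (by linarith)
        have e : (1 : ℂ) - ((a + 1 : ℝ) : ℂ) = -a := by push_cast; ring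
        have e2 : Gamma (1 - (a : ℂ)) = -a * Gamma (-a) := by
          rw [← Gamma_add_one _ (neg_ne_zero.2 ha0)]; ring_nf
        rw [e] at r
        rw [e2, mul_inv]
        have : Ctr θ x (fun w => KK w * exp (a * w)) = (a : ℂ)⁻¹ * (a * Ctr θ x (fun w => KK w * exp (a * w))) := by
          field_simp
        rw [this, inv_neg]
        linear_combination (a : ℂ)⁻¹ * r
  obtain ⟨n, hn⟩ := exists_nat_ge (-a)
  exact key n a (by linarith)

lemma geom_int {α : Type*} [MeasurableSpace α] {μ : Measure α} {A q : α → ℂ} (hA : Integrable A μ)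
    (hq : AEStronglyMeasurable q μ) {r : ℝ} (hr : r < 1) (hb : ∀ᵐ x ∂μ, ‖q x‖ ≤ r) :
    HasSum (fun k : ℕ => ∫ x, A x * q x ^ k ∂μ) (∫ x, A x * (1 - q x)⁻¹ ∂μ) := by
  by_cases hμ : μ = 0
  · subst hμ; simp
  have hr0 : 0 ≤ r := by
    have : NeBot (ae μ) := ae_neBot.2 hμ
    obtain ⟨x, hx⟩ := hb.exists
    exact (norm_nonneg _).trans hx
  refine hasSum_integral_of_dominated_convergence (fun k x => ‖A x‖ * r ^ k) ?_ ?_ ?_ ?_ ?_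
  · intro n; exact hA.1.mul (hq.pow n)
  · intro n
    filter_upwards [hb] with x hx
    rw [norm_mul, norm_pow]
    gcongr
  · refine ae_of_all _ fun x => (summable_geometric_of_lt_one hr0 hr).mul_left _
  · simp_rw [tsum_mul_left]
    exact hA.norm.mul_const _
  · filter_upwards [hb] with x hx
    exact (hasSum_geometric_of_norm_lt_one (hx.trans_lt hr)).mul_left _

lemma ctr_const (θ x : ℝ) (c : ℂ) (F : ℂ → ℂ) : Ctr θ x (fun w => c * F w) = c * Ctr θ x F := by
  simp only [Ctr, integral_const_mul, intervalIntegral.integral_const_mul]; ring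

lemma lin_const (θ : ℝ) (c : ℂ) (F : ℂ → ℂ) : Lin θ (fun w => c * F w) = c * Lin θ F := by
  simp only [Lin, integral_const_mul]; ring

lemma ML_rep {θ : ℝ} (h1 : Real.pi / 2 < θ) (h2 : θ < Real.pi) {ρ t x : ℝ} (hρ : 0 < ρ) (ht : 0 < t)
    (l : ℂ) (hx : ‖l‖ * Real.exp (-ρ * (x - Real.log t)) < 1) :
    ((t ^ (ρ - 1) : ℝ) : ℂ) * mittagLeffler2 ρ (l * ((t ^ ρ : ℝ) : ℂ)) =
      (t : ℂ)⁻¹ * (2 * Real.pi * I)⁻¹ * 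
        Ctr θ x (fun w => KK w * exp w * (exp (ρ * (w - Real.log t)) - l)⁻¹) := by
  have hc := cos_neg_of h1 h2
  have hK := KK_cont
  set L := Real.log t with hL
  set A : ℂ → ℂ := fun w => exp (ρ * L) * (KK w * exp ((1 - ρ : ℝ) * w)) with hA
  set q : ℂ → ℂ := fun w => l * exp (-(ρ * (w - L))) with hq
  have hqn : ∀ w : ℂ, x ≤ w.re → ‖q w‖ ≤ ‖l‖ * Real.exp (-ρ * (x - Real.log t)) := by
    intro w hw
    rw [hq, norm_mul, norm_exp]
    gcongr
    simp [← hL]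
    nlinarith
  have hAc : Continuous A := by fun_prop
  have hqc : Continuous q := by fun_prop
  have P : ∀ σ : ℝ, Real.cos σ < 0 → HasSum (fun k : ℕ => ∫ u in Ioi x, A (u + σ * I) * q (u + σ * I) ^ k)
      (∫ u in Ioi x, A (u + σ * I) * (1 - q (u + σ * I))⁻¹) := by
    intro σ hσ
    apply geom_int ((int_KF _ _ hσ).const_mul _) (by fun_prop) hx
    rw [ae_restrict_iff' measurableSet_Ioi]
    refine ae_of_all _ fun u hu => hqn _ ?_
    simpa using hu.le
  have hθ : -θ ≤ θ := by linarith [Real.pi_pos]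
  have Q : HasSum (fun k : ℕ => ∫ y in (-θ)..θ, A (x + y * I) * q (x + y * I) ^ k)
      (∫ y in (-θ)..θ, A (x + y * I) * (1 - q (x + y * I))⁻¹) := by
    simp_rw [intervalIntegral.integral_of_le hθ]
    apply geom_int _ (by fun_prop) hx
    · refine ae_of_all _ fun u => hqn _ ?_
      simp
    · rw [← IntegrableOn, ← intervalIntegrable_iff_integrableOn_Ioc_of_le hθ]
      exact Continuous.intervalIntegrable (by fun_prop) _ _
  have S : HasSum (fun k : ℕ => Ctr θ x (fun w => A w * q w ^ k)) (Ctr θ x (fun w => A w * (1 - q w)⁻¹)) := 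
    ((P θ hc).sub (P (-θ) (by rwa [Real.cos_neg]))).add (Q.mul_left I)
  have e1 : (fun w => A w * (1 - q w)⁻¹) = (fun w => KK w * exp w * (exp (ρ * (w - L)) - l)⁻¹) := by
    ext w
    have : exp (ρ * (w - L)) - l = exp (ρ * (w - L)) * (1 - q w) := by
      rw [hq]; simp only [mul_sub, mul_one]; rw [mul_left_comm, ← exp_add]; simp
    rw [this, mul_inv, ← exp_neg, hA]
    simp only
    have e : exp (ρ * L) * exp ((1 - ρ : ℝ) * w) = exp w * exp (-(ρ * (w - L))) := by
      rw [← exp_add, ← exp_add]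
      congr 1; push_cast; ring
    linear_combination (KK w * (1 - q w)⁻¹) * e
  have e2 : ∀ k : ℕ, (fun w => A w * q w ^ k) = fun w => (l ^ k * exp (ρ * (k + 1) * L)) * 
      (KK w * exp ((1 - ρ * (k + 1) : ℝ) * w)) := by
    intro k
    ext w
    simp only [hA, hq, mul_pow, ← exp_nat_mul]
    have : exp (ρ * L) * exp ((1 - ρ : ℝ) * w) * exp (k * -(ρ * (w - L))) = exp (ρ * (k + 1) * L) * exp ((1 - ρ * (k + 1) : ℝ) * w) := by
      rw [← exp_add, ← exp_add, ← exp_add]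
      congr 1; push_cast; ring
    linear_combination (KK w * l ^ k) * this
  rw [e1] at S
  simp_rw [e2, ctr_const, hankel h1 h2] at S
  have S2 := (S.mul_left ((t : ℂ)⁻¹ * (2 * Real.pi * I)⁻¹)).tsum_eq
  rw [← S2, mittagLeffler2, ← tsum_mul_left]
  congr 1; ext k
  have hpi : (2 * Real.pi * I : ℂ) ≠ 0 := by simp [Real.pi_ne_zero]
  have g : (1 - ((1 - ρ * (k + 1) : ℝ) : ℂ)) = ρ * k + ρ := by push_cast; ring
  have tt : exp (ρ * (k + 1) * L) = (t : ℂ) * ((t ^ (ρ - 1) : ℝ) : ℂ) * (((t ^ ρ : ℝ) : ℂ)) ^ k := by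
    rw [← ofReal_pow, ← ofReal_mul, ← ofReal_mul, ← ofReal_one, ← ofReal_natCast, ← ofReal_add, 
      ← ofReal_mul, ← ofReal_mul, ← ofReal_exp, Real.rpow_def_of_pos ht, Real.rpow_def_of_pos ht, ← Real.exp_nat_mul, ← hL]
    congr 1
    conv_rhs => rw [← Real.exp_log ht, ← hL, ← Real.exp_add, ← Real.exp_add]
    congr 1; ring
  have htc : (t : ℂ) ≠ 0 := ofReal_ne_zero.2 ht.ne'
  rw [g, tt, mul_pow]
  field_simp

lemma sector_bound {l : ℂ} (hl : l.re < 0) : ∃ θ C : ℝ, Real.pi / 2 < θ ∧ θ < Real.pi ∧ 0 < C ∧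
    ∀ ζ : ℂ, |ζ.im| ≤ θ → exp ζ - l ≠ 0 ∧ ‖(exp ζ - l)⁻¹‖ ≤ C := by
  set κ : ℝ := -l.re / (2 * (|l.im| + 1)) with hκ
  have hk : 0 < κ := div_pos (by linarith) (by positivity)
  have hk2 : κ * |l.im| ≤ -l.re / 2 := by
    rw [hκ, div_mul_eq_mul_div, div_le_iff₀ (by positivity)]
    nlinarith [abs_nonneg l.im]
  refine ⟨Real.pi / 2 + Real.arctan κ, ((-l.re / 2) / (1 + κ))⁻¹, ?_, ?_, ?_, ?_⟩
  · linarith [Real.arctan_pos.2 hk]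
  · linarith [Real.arctan_lt_pi_div_two κ]
  · have : 0 < -l.re := by linarith
    positivity
  intro ζ hζ
  have tr : 0 ≤ Real.cos ζ.im + κ * |Real.sin ζ.im| := by
    rcases le_or_gt |ζ.im| (Real.pi / 2) with h | h
    · have := Real.cos_nonneg_of_mem_Icc (abs_le.1 h)
      positivity
    · set γ := |ζ.im| - Real.pi / 2 with hγ
      have g1 : 0 < γ := by linarith
      have g2 : γ ≤ Real.arctan κ := by linarith
      have g3 := Real.arctan_lt_pi_div_two κ
      have e1 : Real.cos ζ.im = - Real.sin γ := by
        rw [← Real.cos_abs, ← Real.cos_add_pi_div_two]; congr 1; rw [hγ]; ring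
      have e2 : Real.cos γ ≤ |Real.sin ζ.im| := by
        have : |Real.sin ζ.im| = abs (Real.sin (abs ζ.im)) := by
          rcases abs_choice ζ.im with h | h <;> rw [h] <;> simp
        rw [this, ← Real.sin_add_pi_div_two]
        have : γ + Real.pi / 2 = |ζ.im| := by rw [hγ]; ring
        rw [this]
        exact le_abs_self _
      have cp : 0 < Real.cos γ := Real.cos_pos_of_mem_Ioo ⟨by linarith [Real.pi_pos], by linarith⟩
      have t : Real.tan γ ≤ κ := by
        rw [← Real.tan_arctan κ]
        exact Real.strictMonoOn_tan.monotoneOn ⟨by linarith [Real.pi_pos], by linarith⟩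
          ⟨by linarith [Real.pi_pos], g3⟩ g2
      rw [Real.tan_eq_sin_div_cos, div_le_iff₀ cp] at t
      rw [e1]
      nlinarith
  have p : 0 ≤ (exp ζ).re + κ * |(exp ζ).im| := by
    rw [exp_re, exp_im, abs_mul, abs_of_pos (Real.exp_pos _)]
    nlinarith [Real.exp_pos ζ.re]
  have lb : (-l.re / 2) / (1 + κ) ≤ ‖exp ζ - l‖ := by
    rw [div_le_iff₀ (by positivity)]
    have a1 := abs_re_le_norm (exp ζ - l)
    have a2 := abs_im_le_norm (exp ζ - l)
    rw [sub_re] at a1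
    rw [sub_im] at a2
    have a3 := abs_sub_abs_le_abs_sub (exp ζ).im l.im
    have a4 := le_abs_self ((exp ζ).re - l.re)
    nlinarith
  have lp : 0 < (-l.re / 2) / (1 + κ) := div_pos (by linarith) (by positivity)
  constructor
  · rw [← norm_pos_iff]; linarith
  · rw [norm_inv]
    exact inv_anti₀ lp lb

noncomputable def MM (z : ℂ) : ℂ := sin (Real.pi * z) * Gamma (1 + z) / Real.pi

lemma MM_diff {z : ℂ} (hz : -1 < z.re) : DifferentiableAt ℂ MM z := by
  have : DifferentiableAt ℂ (fun z => Gamma (1 + z)) z := by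
    apply DifferentiableAt.comp z (differentiableAt_Gamma _ _) (by fun_prop)
    intro m h
    have := congrArg re h
    simp at this
    have : (0 : ℝ) ≤ m := m.cast_nonneg
    linarith
  unfold MM
  fun_prop

lemma MM_real (ρ : ℝ) : MM ρ = ((Real.sin (Real.pi * ρ) * Real.Gamma (1 + ρ) / Real.pi : ℝ) : ℂ) := by
  unfold MM
  push_cast
  rw [← Gamma_ofReal]
  push_cast
  rfl

lemma MM_deriv_one : deriv MM 1 = -1 := by
  have hg : DifferentiableAt ℂ (fun z => Gamma (1 + z)) 1 := by
    apply DifferentiableAt.comp 1 (differentiableAt_Gamma _ _) (by fun_prop)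
    intro m h
    have := congrArg re h
    simp at this
    have : (0 : ℝ) ≤ m := m.cast_nonneg
    linarith
  have hs : HasDerivAt (fun z : ℂ => sin (Real.pi * z)) (cos (Real.pi * 1) * (Real.pi * 1)) 1 :=
    ((hasDerivAt_id (1 : ℂ)).const_mul (Real.pi : ℂ)).csin
  have h := ((hs.mul hg.hasDerivAt).div_const (Real.pi : ℂ)).deriv
  have e : (1 : ℂ) + 1 = ((1 : ℕ) : ℂ) + 1 := by simp
  have : deriv MM 1 = _ := h
  rw [this, e, Gamma_nat_eq_factorial]
  simp [Real.pi_ne_zero]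

lemma main_mono {β₀ : ℝ} (hβ₀ : 0 < β₀) (hβ₀1 : β₀ < 1) : ∃ L₀ c : ℝ, 0 < L₀ ∧ 0 < c ∧
    ∀ L : ℝ, L₀ ≤ L → ∀ ρ₁ ∈ Icc β₀ 1, ∀ ρ₂ ∈ Icc β₀ 1, ρ₁ < ρ₂ →
      c * (ρ₂ - ρ₁) * Real.exp (-ρ₁ * L) ≤
        Real.exp (-ρ₁ * L) * (MM ρ₁).re - Real.exp (-ρ₂ * L) * (MM ρ₂).re := by
  have hd : ∀ ρ : ℝ, -1 < ρ → HasDerivAt (fun x : ℝ => (MM x).re) (deriv MM ρ).re ρ := fun ρ h =>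
    (MM_diff (z := ρ) (by simpa)).hasDerivAt.real_of_complex
  have hop : IsOpen {z : ℂ | -1 < z.re} := isOpen_lt continuous_const continuous_re
  have hDO : DifferentiableOn ℂ MM {z : ℂ | -1 < z.re} := fun z hz => (MM_diff hz).differentiableWithinAt
  have hcd : ∀ ρ : ℝ, -1 < ρ → ContinuousAt (fun x : ℝ => (deriv MM x).re) ρ := by
    intro ρ h
    have := ((hDO.deriv hop).differentiableAt (hop.mem_nhds (show (ρ : ℂ) ∈ {z : ℂ | -1 < z.re} by simpa))).continuousAt
    exact continuous_re.continuousAt.comp (this.comp continuous_ofReal.continuousAt)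
  have hpos : ∀ ρ : ℝ, 0 < ρ → ρ < 1 → 0 < (MM ρ).re := by
    intro ρ h0 h1
    rw [MM_real, ofReal_re]
    have : 0 < Real.sin (Real.pi * ρ) := Real.sin_pos_of_pos_of_lt_pi (by positivity) (by nlinarith [Real.pi_pos])
    have := Real.Gamma_pos_of_pos (s := 1 + ρ) (by linarith)
    positivity
  have hnn : ∀ ρ : ℝ, 0 < ρ → ρ ≤ 1 → 0 ≤ (MM ρ).re := by
    intro ρ h0 h1
    rcases h1.eq_or_lt with rfl | h
    · rw [MM_real]; simp
    · exact (hpos ρ h0 h).le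
  have key : ∃ L₀ c : ℝ, 0 < L₀ ∧ 0 < c ∧ ∀ ρ ∈ Icc β₀ 1, -L₀ * (MM ρ).re + (deriv MM ρ).re ≤ -c := by
    have h1 := hcd 1 (by norm_num)
    have h2 : ∀ᶠ x : ℝ in 𝓝 1, (deriv MM x).re < -(1/2) := by
      apply h1.eventually_lt_const
      simp [MM_deriv_one]; norm_num
    obtain ⟨ε, hε, h3⟩ := Metric.eventually_nhds_iff.1 h2
    set δ := min (ε / 2) ((1 - β₀) / 2) with hδ
    have hδ0 : 0 < δ := lt_min (by linarith) (by linarith)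
    have hδ1 : δ < ε := (min_le_left _ _).trans_lt (by linarith)
    have hδ2 : δ < 1 - β₀ := (min_le_right _ _).trans_lt (by linarith)
    have hne : (Icc β₀ (1 - δ)).Nonempty := nonempty_Icc.2 (by linarith)
    obtain ⟨x, hx, hxm⟩ := isCompact_Icc.exists_isMinOn hne (f := fun x : ℝ => (MM x).re)
      (fun y hy => (hd y (by linarith [hy.1])).continuousAt.continuousWithinAt)
    obtain ⟨y, hy, hym⟩ := isCompact_Icc.exists_isMaxOn hne (f := fun x : ℝ => (deriv MM x).re)
      (fun y hy => (hcd y (by linarith [hy.1])).continuousWithinAt)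
    have m0 := hpos x (by linarith [hx.1]) (by linarith [hx.2])
    set m := (MM x).re
    set B := (deriv MM y).re
    have hL0 : 0 < (|B| + 1) / m := by positivity
    refine ⟨(|B| + 1) / m, 1/2, hL0, by norm_num, ?_⟩
    intro ρ hρ
    rcases le_or_gt ρ (1 - δ) with h | h
    · have a1 : m ≤ (MM ρ).re := hxm ⟨hρ.1, h⟩
      have a2 : (deriv MM ρ).re ≤ B := hym ⟨hρ.1, h⟩
      have a3 : (|B| + 1) / m * m = |B| + 1 := by field_simp
      have a4 := mul_le_mul_of_nonneg_left a1 hL0.le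
      linarith [le_abs_self B]
    · have a1 := h3 (y := ρ) (by rw [Real.dist_eq, abs_lt]; constructor <;> linarith [hρ.2])
      have a2 := mul_nonneg hL0.le (hnn ρ (by linarith [hρ.1]) hρ.2)
      linarith
  obtain ⟨L₀, c, hL₀, hc, hk⟩ := key
  refine ⟨L₀, c * Real.exp (-L₀), hL₀, by positivity, ?_⟩
  intro L hL ρ₁ h1 ρ₂ h2 h12
  have hN : ∀ ρ : ℝ, -1 < ρ → HasDerivAt (fun x : ℝ => Real.exp (-L₀ * x) * (MM x).re)
      (Real.exp (-L₀ * ρ) * (-L₀ * (MM ρ).re + (deriv MM ρ).re)) ρ := by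
    intro ρ h
    have e : HasDerivAt (fun x : ℝ => Real.exp (-L₀ * x)) (Real.exp (-L₀ * ρ) * (-L₀ * 1)) ρ :=
      ((hasDerivAt_id ρ).const_mul (-L₀)).exp
    refine (e.mul (hd ρ h)).congr_deriv ?_
    ring
  have mvt := Convex.image_sub_le_mul_sub_of_deriv_le (convex_Icc β₀ 1)
    (f := fun x : ℝ => Real.exp (-L₀ * x) * (MM x).re)
    (fun y hy => (hN y (by linarith [hy.1])).continuousAt.continuousWithinAt)
    (fun y hy => (hN y (by rw [interior_Icc] at hy; linarith [hy.1])).differentiableAt.differentiableWithinAt)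
    (C := -(c * Real.exp (-L₀))) (by
      intro y hy
      rw [interior_Icc] at hy
      rw [(hN y (by linarith [hy.1])).deriv]
      have a1 := hk y ⟨hy.1.le, hy.2.le⟩
      have a2 : Real.exp (-L₀) ≤ Real.exp (-L₀ * y) := Real.exp_le_exp.2 (by nlinarith [hy.2])
      have a3 := mul_le_mul_of_nonneg_left a1 (Real.exp_pos (-L₀ * y)).le
      nlinarith) ρ₁ h1 ρ₂ h2 h12.le
  have n2 := hnn ρ₂ (by linarith [h2.1]) h2.2
  set m1 := (MM ρ₁).re
  set m2 := (MM ρ₂).re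
  have b1 : Real.exp (-ρ₂ * L) ≤ Real.exp (-ρ₁ * L) * Real.exp (L₀ * ρ₁) * Real.exp (-L₀ * ρ₂) := by
    rw [← Real.exp_add, ← Real.exp_add]
    apply Real.exp_le_exp.2
    nlinarith
  have b2 : Real.exp (L₀ * ρ₁) * Real.exp (-L₀ * ρ₁) = 1 := by rw [← Real.exp_add]; simp
  have b3 : 1 ≤ Real.exp (L₀ * ρ₁) := Real.one_le_exp (mul_nonneg hL₀.le (by linarith [h1.1]))
  have b4 := mul_le_mul_of_nonneg_right b1 n2
  have b5 : c * Real.exp (-L₀) * (ρ₂ - ρ₁) ≤ Real.exp (L₀ * ρ₁) * (Real.exp (-L₀ * ρ₁) * m1 - Real.exp (-L₀ * ρ₂) * m2) := by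
    have : 0 ≤ c * Real.exp (-L₀) * (ρ₂ - ρ₁) := mul_nonneg (by positivity) (by linarith)
    nlinarith
  have b6 := mul_le_mul_of_nonneg_left b5 (Real.exp_pos (-ρ₁ * L)).le
  calc _ = Real.exp (-ρ₁ * L) * (c * Real.exp (-L₀) * (ρ₂ - ρ₁)) := by ring
    _ ≤ _ := b6
    _ = Real.exp (-ρ₁ * L) * (Real.exp (L₀ * ρ₁) * Real.exp (-L₀ * ρ₁)) * m1 -
       Real.exp (-ρ₁ * L) * Real.exp (L₀ * ρ₁) * Real.exp (-L₀ * ρ₂) * m2 := by ring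
    _ ≤ _ := by rw [b2, mul_one]; linarith

noncomputable def kk (l ζ : ℂ) : ℂ := exp (2 * ζ) * (exp ζ - l)⁻¹

lemma kk_lip {l : ℂ} {θ C : ℝ} (hC : 0 < C)
    (hS : ∀ ζ : ℂ, |ζ.im| ≤ θ → exp ζ - l ≠ 0 ∧ ‖(exp ζ - l)⁻¹‖ ≤ C) {ρ₁ ρ₂ : ℝ} (h1 : 0 < ρ₁)
    (h12 : ρ₁ ≤ ρ₂) (h2 : ρ₂ ≤ 1) {L u σ : ℝ} (hL : 0 ≤ L) (hσ : |σ| ≤ θ) (hθ : θ < 4) :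
    ‖kk l (ρ₂ * (u + σ * I - L)) - kk l (ρ₁ * (u + σ * I - L))‖ ≤
      ((1 + L) * (2 * C + C ^ 2) * Real.exp (-2 * ρ₁ * L) * ((|u| + 5) * (1 + Real.exp (3 * u)))) * (ρ₂ - ρ₁) := by
  set v : ℂ := u + σ * I - L with hv
  have hvre : v.re = u - L := by simp [hv]
  have hvim : v.im = σ := by simp [hv]
  have hvn : ‖v‖ ≤ (1 + L) * (|u| + 5) := by
    have : ‖v‖ ≤ |u| + |σ| + L := by
      rw [hv]
      refine (norm_sub_le _ _).trans ?_
      refine (add_le_add_left (norm_add_le _ _) _).trans ?_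
      simp [abs_of_nonneg hL]
    nlinarith [abs_nonneg u]
  have hd : ∀ ρ ∈ Icc ρ₁ ρ₂, HasDerivWithinAt (fun ρ : ℝ => kk l (ρ * v))
      (v * (2 * exp (2 * (ρ * v)) * (exp (ρ * v) - l)⁻¹ - exp (3 * (ρ * v)) * (exp (ρ * v) - l)⁻¹ ^ 2)) (Icc ρ₁ ρ₂) ρ := by
    intro ρ hρ
    have hne := (hS (ρ * v) (by 
      simp [hvim, abs_mul, abs_of_pos (h1.trans_le hρ.1)]
      have := hρ.2
      nlinarith [abs_nonneg σ])).1
    have e0 : HasDerivAt (fun ρ : ℝ => (ρ : ℂ) * v) v ρ := by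
      simpa using (Complex.ofRealCLM.hasDerivAt (x := ρ)).mul_const v
    have e1 : HasDerivAt (fun ζ => kk l ζ) (2 * exp (2 * (ρ * v)) * (exp (ρ * v) - l)⁻¹ 
        - exp (3 * (ρ * v)) * (exp (ρ * v) - l)⁻¹ ^ 2) (ρ * v) := by
      have f1 : HasDerivAt (fun ζ : ℂ => exp (2 * ζ)) (exp (2 * (ρ * v)) * (2 * 1)) (ρ * v) :=
        ((hasDerivAt_id (ρ * v : ℂ)).const_mul 2).cexp
      have f2 := ((Complex.hasDerivAt_exp (ρ * v)).sub_const l).fun_inv hne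
      refine (f1.mul f2).congr_deriv ?_
      have : exp (3 * (ρ * v)) = exp (2 * (ρ * v)) * exp (ρ * v) := by rw [← exp_add]; congr 1; ring
      rw [this]
      field_simp
      ring
    refine (HasDerivAt.congr_deriv (e1.comp ρ e0) (mul_comm _ _)).hasDerivWithinAt
  have bd : ∀ ρ ∈ Icc ρ₁ ρ₂, ‖v * (2 * exp (2 * (ρ * v)) * (exp (ρ * v) - l)⁻¹ - exp (3 * (ρ * v)) * (exp (ρ * v) - l)⁻¹ ^ 2)‖
      ≤ (1 + L) * (2 * C + C ^ 2) * Real.exp (-2 * ρ₁ * L) * ((|u| + 5) * (1 + Real.exp (3 * u))) := by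
    intro ρ hρ
    have hρ0 : 0 < ρ := h1.trans_le hρ.1
    have hρ1 : ρ ≤ 1 := hρ.2.trans h2
    have hb := (hS (ρ * v) (by 
      simp [hvim, abs_mul, abs_of_pos hρ0]
      nlinarith [abs_nonneg σ])).2
    have hexp : ∀ j : ℝ, 2 ≤ j → j ≤ 3 → Real.exp (j * (ρ * (u - L))) ≤ Real.exp (-2 * ρ₁ * L) * (1 + Real.exp (3 * u)) := by
      intro j j2 j3
      have p1 : j * (ρ * (u - L)) = j * ρ * u + -(j * ρ * L) := by ring
      rw [p1, Real.exp_add, mul_comm]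
      have p2 : 2 * ρ₁ * L ≤ j * ρ * L := by
        apply mul_le_mul_of_nonneg_right _ hL
        nlinarith [hρ.1]
      apply mul_le_mul (Real.exp_le_exp.2 (by linarith)) _ (Real.exp_pos _).le (Real.exp_pos _).le
      rcases le_total u 0 with h | h
      · have : Real.exp (j * ρ * u) ≤ 1 := Real.exp_le_one_iff.2 (mul_nonpos_of_nonneg_of_nonpos (by positivity) h)
        linarith [Real.exp_pos (3 * u)]
      · have : Real.exp (j * ρ * u) ≤ Real.exp (3 * u) := Real.exp_le_exp.2 (by
          apply mul_le_mul_of_nonneg_right _ h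
          nlinarith)
        linarith
    have n2 : ‖exp (2 * (ρ * v))‖ ≤ Real.exp (-2 * ρ₁ * L) * (1 + Real.exp (3 * u)) := by
      have := hexp 2 le_rfl (by norm_num)
      rw [norm_exp]; simpa [hvre] using this
    have n3 : ‖exp (3 * (ρ * v))‖ ≤ Real.exp (-2 * ρ₁ * L) * (1 + Real.exp (3 * u)) := by
      have := hexp 3 (by norm_num) le_rfl
      rw [norm_exp]; simpa [hvre] using this
    set E := Real.exp (-2 * ρ₁ * L) * (1 + Real.exp (3 * u)) with hE
    have hE0 : 0 ≤ E := by positivity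
    calc _ ≤ ‖v‖ * (2 * ‖exp (2 * (ρ * v))‖ * ‖(exp (ρ * v) - l)⁻¹‖ + ‖exp (3 * (ρ * v))‖ * ‖(exp (ρ * v) - l)⁻¹‖ ^ 2) := by
          rw [norm_mul]
          gcongr
          refine (norm_sub_le _ _).trans ?_
          simp
      _ ≤ ((1 + L) * (|u| + 5)) * (2 * E * C + E * C ^ 2) := by
          gcongr
      _ = _ := by rw [hE]; ring
  have := (convex_Icc ρ₁ ρ₂).norm_image_sub_le_of_norm_hasDerivWithin_le hd bd
    (left_mem_Icc.2 h12) (right_mem_Icc.2 h12)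
  rwa [Real.norm_of_nonneg (by linarith)] at this

lemma W_int {c : ℝ} (hc : 0 < c) : Integrable (fun u : ℝ => 
    (Real.exp (1 * u) * Real.exp (-c * Real.exp u)) * ((|u| + 5) * (1 + Real.exp (3 * u)))) := by
  have i := (((base_int (a := 3/2) (by norm_num) hc).add (base_int (a := 1/2) (by norm_num) hc)).add
    ((base_int (a := 9/2) (by norm_num) hc).add (base_int (a := 7/2) (by norm_num) hc))).const_mul 7
  refine i.mono' (by fun_prop) (ae_of_all _ fun u => ?_)
  rw [Real.norm_of_nonneg (by positivity)]
  simp only [Pi.add_apply]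
  have h : |u| + 5 ≤ 7 * (Real.exp (u / 2) + Real.exp (-(u / 2))) := by
    have a1 := Real.add_one_le_exp (u / 2)
    have a2 := Real.add_one_le_exp (-(u / 2))
    have a3 := Real.exp_pos (u / 2)
    have a4 := Real.exp_pos (-(u / 2))
    rcases abs_cases u with ⟨h, _⟩ | ⟨h, _⟩ <;> rw [h] <;> linarith
  have e : ∀ a b : ℝ, Real.exp (a * u) * Real.exp (b * u) = Real.exp ((a + b) * u) := by
    intro a b; rw [← Real.exp_add]; ring_nf
  calc _ ≤ (Real.exp (1 * u) * Real.exp (-c * Real.exp u)) * (7 * (Real.exp (u / 2) + Real.exp (-(u / 2))) * (1 + Real.exp (3 * u))) := by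
        gcongr
    _ = _ := by
        have x1 : u / 2 = (1/2) * u := by ring
        have x2 : -(u / 2) = (-1/2) * u := by ring
        rw [x2, x1]
        have y1 := e 1 (1/2)
        have y2 := e 1 (-1/2)
        have y3 := e (3/2) 3
        have y4 := e (1/2) 3
        norm_num at y1 y2 y3 y4 ⊢
        rw [← y3, ← y4, ← y1, ← y2]
        ring

lemma R_int {l : ℂ} {θ C : ℝ} (hS : ∀ ζ : ℂ, |ζ.im| ≤ θ → exp ζ - l ≠ 0 ∧ ‖(exp ζ - l)⁻¹‖ ≤ C)
    {ρ : ℝ} (h0 : 0 < ρ) (h1 : ρ ≤ 1) (L : ℝ) {σ : ℝ} (hσ : |σ| ≤ θ) (hc : Real.cos σ < 0) :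
    Integrable (fun u : ℝ => KK (u + σ * I) * exp (u + σ * I) * kk l (ρ * (u + σ * I - L))) := by
  have hK := KK_cont.measurable
  refine ((base_int (a := 1 + 2 * ρ) (by positivity) (c := -Real.cos σ) (by linarith)).const_mul
    (C * Real.exp (-(2 * ρ * L)))).mono' ?_ (ae_of_all _ fun u => ?_)
  · unfold kk
    exact Measurable.aestronglyMeasurable (by fun_prop)
  · have hb := (hS (ρ * (u + σ * I - L)) (by 
      simp [abs_mul, abs_of_pos h0]
      nlinarith [abs_nonneg σ])).2
    unfold kk
    rw [norm_mul, norm_mul, norm_mul, norm_KK, norm_exp, norm_exp]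
    have e : Real.exp (1 * u) * Real.exp (2 * (ρ * (u - L))) = Real.exp (-(2 * ρ * L)) * Real.exp ((1 + 2 * ρ) * u) := by
      rw [← Real.exp_add, ← Real.exp_add]; ring_nf
    have r1 : ((u : ℂ) + σ * I).re = 1 * u := by simp
    have r2 : (2 * ((ρ : ℂ) * (u + σ * I - L))).re = 2 * (ρ * (u - L)) := by simp
    rw [r1, r2]
    calc _ = (Real.exp (1 * u) * Real.exp (2 * (ρ * (u - L)))) * Real.exp (-(-Real.cos σ) * Real.exp u) * ‖(exp (ρ * (u + σ * I - L)) - l)⁻¹‖ := by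
          ring_nf
      _ ≤ (Real.exp (1 * u) * Real.exp (2 * (ρ * (u - L)))) * Real.exp (-(-Real.cos σ) * Real.exp u) * C := by gcongr
      _ = _ := by rw [e]; ring

lemma F_int {l : ℂ} {θ C : ℝ} (hS : ∀ ζ : ℂ, |ζ.im| ≤ θ → exp ζ - l ≠ 0 ∧ ‖(exp ζ - l)⁻¹‖ ≤ C)
    {ρ : ℝ} (h0 : 0 < ρ) (h1 : ρ ≤ 1) (L : ℝ) {σ : ℝ} (hσ : |σ| ≤ θ) (hc : Real.cos σ < 0) :
    Integrable (fun u : ℝ => KK (u + σ * I) * exp (u + σ * I) * (exp (ρ * (u + σ * I - L)) - l)⁻¹) := by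
  have hK := KK_cont.measurable
  refine ((base_int (a := 1) (by positivity) (c := -Real.cos σ) (by linarith)).const_mul
    C).mono' ?_ (ae_of_all _ fun u => ?_)
  · exact Measurable.aestronglyMeasurable (by fun_prop)
  · have hb := (hS (ρ * (u + σ * I - L)) (by 
      simp [abs_mul, abs_of_pos h0]
      nlinarith [abs_nonneg σ])).2
    have := norm_KF 1 u σ
    rw [ofReal_one, one_mul] at this
    rw [norm_mul, this, mul_comm]
    gcongr

lemma rep {l : ℂ} {θ C : ℝ} (t1 : Real.pi / 2 < θ) (t2 : θ < Real.pi)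
    (hl : l ≠ 0)
    (hS : ∀ ζ : ℂ, |ζ.im| ≤ θ → exp ζ - l ≠ 0 ∧ ‖(exp ζ - l)⁻¹‖ ≤ C)
    {ρ : ℝ} (h0 : 0 < ρ) (h1 : ρ ≤ 1) {t : ℝ} (ht : 0 < t) :
    l ^ 2 * (((t ^ (ρ - 1) : ℝ) : ℂ) * mittagLeffler2 ρ (l * ((t ^ ρ : ℝ) : ℂ))) = 
      (t : ℂ)⁻¹ * (((Real.exp (-ρ * Real.log t) * (MM ρ).re : ℝ) : ℂ) + (2 * Real.pi * I)⁻¹ * 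
        Lin θ (fun w => KK w * exp w * kk l (ρ * (w - Real.log t)))) := by
  have hc := cos_neg_of t1 t2
  have hc' : Real.cos (-θ) < 0 := by rwa [Real.cos_neg]
  have hθ : 0 < θ := by linarith [Real.pi_pos]
  have hln : 0 < ‖l‖ := norm_pos_iff.2 hl
  set L := Real.log t
  set x : ℝ := L + (Real.log ‖l‖ + 1) / ρ with hx
  have hxx : ‖l‖ * Real.exp (-ρ * (x - Real.log t)) < 1 := by
    have : -ρ * (x - Real.log t) = -(Real.log ‖l‖ + 1) := by
      simp only [hx, L]; field_simp; ring
    rw [this]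
    nth_rewrite 1 [← Real.exp_log hln]
    rw [← Real.exp_add]
    rw [Real.exp_lt_one_iff]; linarith
  rw [ML_rep t1 t2 h0 ht l hxx]
  have hσ : |θ| ≤ θ := by rw [abs_of_pos hθ]
  have hσ' : |(-θ)| ≤ θ := by rw [abs_neg, abs_of_pos hθ]
  have him : ∀ w : ℂ, |w.im| ≤ θ → |((ρ : ℂ) * (w - L)).im| ≤ θ := by
    intro w hw
    simp [abs_mul, abs_of_pos h0]
    nlinarith [abs_nonneg w.im]
  rw [con_eq_lin (C := Real.exp 1 * C) (a := 1) hθ ?_ (F_int hS h0 h1 L hσ hc) (F_int hS h0 h1 L hσ' hc')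
    one_pos]
  rotate_left
  · intro w hw hw0
    rw [norm_mul, norm_mul, norm_exp, one_mul, mul_right_comm]
    gcongr
    · exact norm_KK_le hw0
    · exact (hS _ (him w hw)).2
  · intro w hw
    have := KK_diff w
    have hne := (hS _ (him w hw)).1
    apply DifferentiableAt.differentiableWithinAt
    apply DifferentiableAt.mul (by fun_prop)
    exact DifferentiableAt.fun_inv (by fun_prop) hne
  -- pointwise decomposition
  have P : ∀ σ : ℝ, |σ| ≤ θ → Real.cos σ < 0 → 
      l ^ 2 * (∫ u : ℝ, KK (u + σ * I) * exp (u + σ * I) * (exp (ρ * (u + σ * I - L)) - l)⁻¹) =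
      -l * (∫ u : ℝ, KK (u + σ * I) * exp ((1 : ℝ) * (u + σ * I))) 
      - exp (-ρ * L) * (∫ u : ℝ, KK (u + σ * I) * exp ((1 + ρ : ℝ) * (u + σ * I)))
      + ∫ u : ℝ, KK (u + σ * I) * exp (u + σ * I) * kk l (ρ * (u + σ * I - L)) := by
    intro σ h hcσ
    have i1 := (int_KF_line one_pos hcσ).const_mul (-l)
    have i2 := (int_KF_line (a := 1 + ρ) (by positivity) hcσ).const_mul (exp (-ρ * L))
    have i3 := R_int hS h0 h1 L h hcσ
    have i12 : Integrable (fun u : ℝ => -l * (KK (u + σ * I) * exp ((1 : ℝ) * (u + σ * I)))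
        - exp (-ρ * L) * (KK (u + σ * I) * exp ((1 + ρ : ℝ) * (u + σ * I)))) := i1.sub i2
    rw [← integral_const_mul, ← integral_const_mul, ← integral_const_mul, ← integral_sub i1 i2,
      ← integral_add i12 i3]
    congr 1; ext u
    set w : ℂ := u + σ * I with hw
    have hne := (hS _ (him w (by simpa [hw] using h))).1
    have e1 : exp (-ρ * L) * exp ((1 + ρ : ℝ) * w) = exp w * exp (ρ * (w - L)) := by
      rw [← exp_add, ← exp_add]; congr 1; push_cast; ring
    have e2 : exp (2 * (ρ * (w - L))) = exp (ρ * (w - L)) ^ 2 := by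
      rw [← exp_nat_mul]; simp
    rw [mul_left_comm (exp _) (KK w), e1, kk, e2, ofReal_one, one_mul]
    field_simp
    ring
  have P1 := P θ hσ hc
  have P2 := P (-θ) hσ' hc'
  have G1 := lin_gamma one_pos t1 t2
  have G2 := lin_gamma (a := 1 + ρ) (by positivity) t1 t2
  have hs : Real.sin (Real.pi * (1 + ρ)) = - Real.sin (Real.pi * ρ) := by
    rw [mul_add, mul_one, add_comm, Real.sin_add_pi]
  rw [hs] at G2
  have hpi : (Real.pi : ℂ) ≠ 0 := ofReal_ne_zero.2 Real.pi_ne_zero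
  have hM : ((MM ρ).re : ℂ) = Real.sin (Real.pi * ρ) * Gamma ((1 + ρ : ℝ) : ℂ) / Real.pi := by
    rw [MM_real, ofReal_re]; push_cast; rw [← Gamma_ofReal]; push_cast; rfl
  rw [mul_one, Real.sin_pi] at G1
  rw [ofReal_mul, hM, ofReal_exp]
  simp only [Lin] at G1 G2 ⊢
  push_cast at G1 G2 P1 P2 ⊢
  have hI : I ≠ 0 := I_ne_zero
  have fin : (sin (Real.pi * ρ : ℂ) * Gamma (1 + ρ) / Real.pi) = -((2 * Real.pi * I)⁻¹ * (2 * I * -sin (Real.pi * ρ) * Gamma (1 + ρ))) := by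
    field_simp
  rw [fin]
  linear_combination (t : ℂ)⁻¹ * (2 * Real.pi * I)⁻¹ * (P1 - P2 - l * G1 - exp (-ρ * L) * G2)

lemma rem_bound {l : ℂ} {θ C : ℝ} (t1 : Real.pi / 2 < θ) (t2 : θ < Real.pi) (hC : 0 < C)
    (hS : ∀ ζ : ℂ, |ζ.im| ≤ θ → exp ζ - l ≠ 0 ∧ ‖(exp ζ - l)⁻¹‖ ≤ C) : ∃ D : ℝ, 0 < D ∧
    ∀ ρ₁ ρ₂ L : ℝ, 0 < ρ₁ → ρ₁ < ρ₂ → ρ₂ ≤ 1 → 0 ≤ L → 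
      ‖Lin θ (fun w => KK w * exp w * kk l (ρ₂ * (w - L))) - Lin θ (fun w => KK w * exp w * kk l (ρ₁ * (w - L)))‖
        ≤ D * (1 + L) * Real.exp (-2 * ρ₁ * L) * (ρ₂ - ρ₁) := by
  have hc := cos_neg_of t1 t2
  have hθ : 0 < θ := by linarith [Real.pi_pos]
  set J : ℝ := ∫ u : ℝ, (Real.exp (1 * u) * Real.exp (-(-Real.cos θ) * Real.exp u)) * ((|u| + 5) * (1 + Real.exp (3 * u))) with hJ
  have hJ0 : 0 ≤ J := integral_nonneg fun u => by positivity
  refine ⟨2 * (2 * C + C ^ 2) * J + 1, by positivity, ?_⟩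
  intro ρ₁ ρ₂ L h1 h12 h2 hL
  have P : ∀ σ : ℝ, |σ| ≤ θ → Real.cos σ = Real.cos θ → 
      ‖(∫ u : ℝ, KK (u + σ * I) * exp (u + σ * I) * kk l (ρ₂ * (u + σ * I - L))) - 
        ∫ u : ℝ, KK (u + σ * I) * exp (u + σ * I) * kk l (ρ₁ * (u + σ * I - L))‖ ≤
      ((1 + L) * (2 * C + C ^ 2) * Real.exp (-2 * ρ₁ * L) * (ρ₂ - ρ₁)) * J := by
    intro σ h hcs
    have hcσ : Real.cos σ < 0 := by rw [hcs]; exact hc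
    rw [← integral_sub (R_int hS (h1.trans h12) h2 L h hcσ) (R_int hS h1 (h12.le.trans h2) L h hcσ), hJ,
      ← integral_const_mul]
    refine norm_integral_le_of_norm_le ((W_int (c := -Real.cos θ) (by linarith)).const_mul _) (ae_of_all _ fun u => ?_)
    have n := norm_KF 1 u σ
    rw [ofReal_one, one_mul] at n
    rw [← mul_sub, norm_mul, n, hcs]
    have := kk_lip hC hS h1 h12.le h2 (u := u) hL h (by linarith [Real.pi_lt_four])
    refine (mul_le_mul_of_nonneg_left this (by positivity)).trans (le_of_eq (by ring))
  have P1 := P θ (by rw [abs_of_pos hθ]) rfl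
  have P2 := P (-θ) (by rw [abs_neg, abs_of_pos hθ]) (Real.cos_neg _)
  simp only [Lin]
  rw [sub_sub_sub_comm]
  refine (norm_sub_le _ _).trans ((add_le_add P1 P2).trans ?_)
  have : 0 ≤ (1 + L) * Real.exp (-2 * ρ₁ * L) * (ρ₂ - ρ₁) := mul_nonneg (by positivity) (by linarith)
  linarith

/-- For `0 < β₀ < 1` and `Re λ < 0`, `|Re λ| ≠ |Im λ|`, there is `T₁ > 1` such that
for all `t₀ ≥ T₁`: any value `b` attained by `ρ ↦ t₀^{ρ−1} E_{ρ,ρ}(λ t₀^ρ)` on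
`[β₀, 1)` is attained at a *unique* point `ρ* ∈ [β₀, 1]`. -/
theorem riemann_liouville_unique_order (β₀ : ℝ) (hβ₀ : 0 < β₀) (hβ₀1 : β₀ < 1)
    (l : ℂ) (hl : l.re < 0) (hl' : |l.re| ≠ |l.im|) :
    ∃ T₁ : ℝ, 1 < T₁ ∧ ∀ t₀ : ℝ, T₁ ≤ t₀ →
      ∀ b ∈ (fun ρ : ℝ => ((t₀ ^ (ρ - 1) : ℝ) : ℂ) *
          mittagLeffler2 ρ (l * ((t₀ ^ ρ : ℝ) : ℂ))) '' Set.Ico β₀ 1,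
        ∃! ρ : ℝ, ρ ∈ Set.Icc β₀ 1 ∧
          ((t₀ ^ (ρ - 1) : ℝ) : ℂ) * mittagLeffler2 ρ (l * ((t₀ ^ ρ : ℝ) : ℂ)) = b := by
  obtain ⟨θ, C, t1, t2, hC, hS⟩ := sector_bound hl
  obtain ⟨L₀, c, hL₀, hc, hmono⟩ := main_mono hβ₀ hβ₀1
  obtain ⟨D, hD, hrem⟩ := rem_bound t1 t2 hC hS
  have hl0 : l ≠ 0 := by rintro rfl; simp at hl
  have T : Tendsto (fun L : ℝ => D * (1 + L) * Real.exp (-β₀ * L)) atTop (𝓝 0) := by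
    have a1 := tendsto_rpow_mul_exp_neg_mul_atTop_nhds_zero 0 β₀ hβ₀
    have a2 := tendsto_rpow_mul_exp_neg_mul_atTop_nhds_zero 1 β₀ hβ₀
    have := (a1.add a2).const_mul D
    simp only [add_zero, mul_zero] at this
    refine this.congr fun L => ?_
    simp; ring
  have ev : ∀ᶠ t : ℝ in atTop, L₀ ≤ Real.log t ∧ D * (1 + Real.log t) * Real.exp (-β₀ * Real.log t) < c :=
    Real.tendsto_log_atTop.eventually ((eventually_ge_atTop L₀).and (T.eventually_lt_const hc))
  obtain ⟨T₀, hT₀⟩ := eventually_atTop.1 ev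
  refine ⟨max T₀ 2, lt_max_of_lt_right (by norm_num), ?_⟩
  intro t ht
  have ht2 : 2 ≤ t := (le_max_right _ _).trans ht
  obtain ⟨hL, hsm⟩ := hT₀ t ((le_max_left _ _).trans ht)
  have ht0 : 0 < t := by linarith
  have htc : (t : ℂ) ≠ 0 := ofReal_ne_zero.2 ht0.ne'
  have main : ∀ ρ₁ ∈ Icc β₀ 1, ∀ ρ₂ ∈ Icc β₀ 1, ρ₁ < ρ₂ → 
      ((t ^ (ρ₁ - 1) : ℝ) : ℂ) * mittagLeffler2 ρ₁ (l * ((t ^ ρ₁ : ℝ) : ℂ)) ≠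
      ((t ^ (ρ₂ - 1) : ℝ) : ℂ) * mittagLeffler2 ρ₂ (l * ((t ^ ρ₂ : ℝ) : ℂ)) := by
    intro ρ₁ h1 ρ₂ h2 h12 heq
    have r1 := rep t1 t2 hl0 hS (hβ₀.trans_le h1.1) h1.2 ht0
    have r2 := rep t1 t2 hl0 hS (hβ₀.trans_le h2.1) h2.2 ht0
    rw [heq, r2] at r1
    have r3 := mul_left_cancel₀ (inv_ne_zero htc) r1
    set L := Real.log t
    have m := hmono L hL ρ₁ h1 ρ₂ h2 h12
    have b := hrem ρ₁ ρ₂ L (hβ₀.trans_le h1.1) h12 h2.2 (hL₀.le.trans hL)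
    set X := Lin θ (fun w => KK w * exp w * kk l (ρ₂ * (w - L)))
    set Y := Lin θ (fun w => KK w * exp w * kk l (ρ₁ * (w - L)))
    set x1 := Real.exp (-ρ₁ * L) * (MM ρ₁).re
    set x2 := Real.exp (-ρ₂ * L) * (MM ρ₂).re
    have r4 : ((x1 - x2 : ℝ) : ℂ) = (2 * Real.pi * I)⁻¹ * (X - Y) := by
      push_cast; linear_combination -r3
    have r5 : ‖((x1 - x2 : ℝ) : ℂ)‖ ≤ ‖X - Y‖ := by
      rw [r4, norm_mul]
      apply mul_le_of_le_one_left (norm_nonneg _)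
      simp only [norm_inv, norm_mul, norm_I, mul_one, Complex.norm_ofNat, norm_real]
      apply inv_le_one_of_one_le₀
      rw [Real.norm_of_nonneg Real.pi_pos.le]
      linarith [Real.pi_gt_three]
    rw [norm_real, Real.norm_eq_abs] at r5
    have r6 := (m.trans (le_abs_self _)).trans (r5.trans b)
    have e1 : Real.exp (-2 * ρ₁ * L) = Real.exp (-ρ₁ * L) * Real.exp (-ρ₁ * L) := by
      rw [← Real.exp_add]; ring_nf
    have e2 : Real.exp (-ρ₁ * L) ≤ Real.exp (-β₀ * L) := Real.exp_le_exp.2 (by nlinarith [h1.1])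
    have e3 : D * (1 + L) * Real.exp (-ρ₁ * L) < c := by
      refine lt_of_le_of_lt ?_ hsm
      have : 0 ≤ L := hL₀.le.trans hL
      gcongr
    have e4 : 0 < (ρ₂ - ρ₁) * Real.exp (-ρ₁ * L) := mul_pos (by linarith) (Real.exp_pos _)
    rw [e1] at r6
    nlinarith
  rintro b ⟨ρ, hρ, rfl⟩
  refine ⟨ρ, ⟨⟨hρ.1, hρ.2.le⟩, rfl⟩, ?_⟩
  rintro ρ' ⟨h', he⟩
  rcases lt_trichotomy ρ' ρ with h | h | h
  · exact absurd he (main ρ' h' ρ ⟨hρ.1, hρ.2.le⟩ h)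
  · exact h
  · exact absurd he.symm (main ρ ⟨hρ.1, hρ.2.le⟩ ρ' h' h)
end
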